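/- arXiv:2011.12828 — 2 statements merged into one kernel-verified Lean document; each statement's English description precedes it below -/
import Mathlib

section
/- Seventh new modulus-8 identity (profile (3,2,0)): the quadruple sum over n_1,n_2,n_3,n_4 ≥ 0 of q^(n_1^2+n_2^2+n_3^2+n_4^2+n_1-n_1n_2+n_2n_4)·(q^{n_3} + q^{n_1+1} + q^{2n_1+n_3+2} + q^{3n_1+n_2+n_3+n_4+3})/(q;q)_{n_1} · [n_1 choose n_2]_q [n_1 choose n_4]_q [n_2 choose n_3]_q equals 1/((q,q^2,q^2,q^3,q^5,q^6,q^6,q^7; q^8)_∞). -/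
/-! The quadruple sums are compared with lattice sums that solve the same `q`-difference system.

Introduce a second variable `z` recording `n₁`. The quadruple sums attached to seven profiles `c` of
level 5 (`g221`, ..., `g320`) satisfy the Corteel-Welsh `q`-difference system; three of its equations
are genuine (`rec311`, `rec410`, `rec221`) and are linear combinations of contiguous relations that
hold termwise, while the other four serve as definitions or are checked directly. After division by
`(z;q)_∞` the system becomes a recurrence `CWSystem` for coefficients, which determines its solution
from the values at `n = 0` (`CWSystem.unique`). A second solution is given by signed sums `latL` over
the `A₂` root lattice of products of three reciprocal q-factorials: the general equation `latL_rec`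
is immediate, and a rotation and a reflection of the lattice take care of the profiles with a zero
part. Hence the quadruple sums and the lattice sums agree (`conv_g320`). This part takes place in a
field, with `w` neither zero nor a root of unity, and is applied to `w = q` in the fraction field of
`ℚ⟦q⟧`.

Letting `n → ∞` in `conv_g320` turns the right side into a difference of two theta series of the
lattice, divided by `(q;q)_∞ ^ 3`, and the left side into the quadruple sum of the theorem divided
by `(q;q)_∞` (`quadruple_eq_lattice`).

To evaluate the theta series, take the product over `r = 1, 3, 4` of the Jacobi series
`∑ (-1)^j q^(8 j(j-1)/2 + r j)`, each of which is a triple product (`tsum_th`), and sum it over `ℤ³`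
along the lines of direction `(-1, -1, 1)`. There are three classes of lines modulo `3`. On one of
them the sum over a line vanishes; on the other two it is the pentagonal number series
`(q^8; q^8)_∞`, and what remains are precisely the two lattice theta series (`theta_eq_lattice`).
Cancelling common factors gives the product. -/

open scoped Finset

noncomputable instance : TopologicalSpace (PowerSeries ℚ) :=
  Pi.topologicalSpace (ι := Unit →₀ ℕ) (Y := fun _ => ℚ)

/-- The formal variable `q`. -/
noncomputable def q : PowerSeries ℚ := PowerSeries.X

/-- The q-Pochhammer symbol `(q;q)_n = ∏_{k=0}^{n-1} (1 - q·q^k)`. -/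
noncomputable def qPoch (n : ℕ) : PowerSeries ℚ :=
  ∏ k ∈ Finset.range n, (1 - q ^ (k + 1))

/-- The Gaussian binomial coefficient `[m choose k]_q`, zero unless `k ≤ m`. -/
noncomputable def qBinom (m k : ℕ) : PowerSeries ℚ :=
  if k ≤ m then qPoch m * (qPoch k * qPoch (m - k))⁻¹ else 0

/-! ### Reciprocal q-factorials and finitely supported sums -/

namespace Macmahon

section Field

variable {K : Type*} [Field K]

/-- The q-factorial `(w;w)_n`, extended by `1` to negative `n`. -/
noncomputable def poch (w : K) (n : ℤ) : K := ∏ k ∈ Finset.range n.toNat, (1 - w ^ (k + 1))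

/-- The reciprocal q-factorial `1/(w;w)_n`, extended by `0` to negative `n`, so that
`(1 - w^n) * rpoch w n = rpoch w (n-1)` for every integer `n`. -/
noncomputable def rpoch (w : K) (n : ℤ) : K := if 0 ≤ n then (poch w n)⁻¹ else 0

/-- `w` is neither zero nor a root of unity. -/
def Generic (w : K) : Prop := w ≠ 0 ∧ ∀ k : ℕ, w ^ (k + 1) ≠ 1

lemma Generic.ne {w : K} (hw : Generic w) {n : ℤ} (hn : 0 < n) : 1 - w ^ n ≠ 0 := by
  obtain ⟨k, rfl⟩ : ∃ k : ℕ, n = (k + 1 : ℕ) := ⟨n.toNat - 1, by omega⟩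
  rw [zpow_natCast]
  exact fun h => hw.2 k (sub_eq_zero.1 h).symm

lemma poch_succ (w : K) {n : ℤ} (hn : 0 ≤ n) : poch w (n + 1) = (1 - w ^ (n + 1)) * poch w n := by
  obtain ⟨k, rfl⟩ := Int.eq_ofNat_of_zero_le hn
  have h1 : ((k : ℤ) + 1).toNat = k + 1 := by omega
  have h2 : w ^ ((k : ℤ) + 1) = w ^ (k + 1) := by exact_mod_cast zpow_natCast w (k + 1)
  simp only [poch, h1, h2, Int.toNat_natCast, Finset.prod_range_succ]
  ring

lemma poch_ne {w : K} (hw : Generic w) (n : ℤ) : poch w n ≠ 0 :=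
  Finset.prod_ne_zero_iff.2 fun k _ h => hw.2 k (sub_eq_zero.1 h).symm

lemma rpoch_neg (w : K) {n : ℤ} (hn : n < 0) : rpoch w n = 0 := if_neg (by omega)

@[simp] lemma poch_zero (w : K) : poch w 0 = 1 := by simp [poch]

@[simp] lemma rpoch_zero (w : K) : rpoch w 0 = 1 := by simp [rpoch]

lemma rpoch_rec {w : K} (hw : Generic w) (n : ℤ) :
    rpoch w n * (1 - w ^ n) = rpoch w (n - 1) := by
  rcases lt_trichotomy n 0 with h | rfl | h
  · rw [rpoch_neg w h, rpoch_neg w (by omega), zero_mul]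
  · simp [rpoch_neg w (show (-1 : ℤ) < 0 by norm_num)]
  · obtain ⟨m, rfl⟩ : ∃ m, n = m + 1 := ⟨n - 1, by ring⟩
    have h1 := hw.ne h
    have h2 := poch_ne hw m
    rw [rpoch, rpoch, if_pos (by omega), if_pos (by omega), poch_succ w (by omega)]
    simp only [add_sub_cancel_right]
    field_simp

/-- A linear relation which holds termwise after a change of index holds for the sums. -/
lemma finsum_rel {α : Type*} (σ : α ≃ α) {f₁ f₂ f₃ f₄ g₁ g₂ : α → K} (a₁ a₂ a₃ a₄ b₁ b₂ : K)
    (h₁ : f₁.support.Finite) (h₂ : f₂.support.Finite) (h₃ : f₃.support.Finite)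
    (h₄ : f₄.support.Finite) (k₁ : g₁.support.Finite) (k₂ : g₂.support.Finite)
    (h : ∀ m, a₁ * f₁ m + a₂ * f₂ m + a₃ * f₃ m + a₄ * f₄ m = b₁ * g₁ (σ m) + b₂ * g₂ (σ m)) :
    a₁ * ∑ᶠ m, f₁ m + a₂ * ∑ᶠ m, f₂ m + a₃ * ∑ᶠ m, f₃ m + a₄ * ∑ᶠ m, f₄ m
      = b₁ * ∑ᶠ m, g₁ m + b₂ * ∑ᶠ m, g₂ m := by
  have fin : ∀ (a : K) {f : α → K}, f.support.Finite → (fun m => a * f m).support.Finite :=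
    fun a f hf => hf.subset fun m hm hf0 => hm (by simp [hf0])
  have finadd : ∀ {f g : α → K}, f.support.Finite → g.support.Finite →
      (fun m => f m + g m).support.Finite :=
    fun hf hg => (hf.union hg).subset (Function.support_add _ _)
  calc _ = ∑ᶠ m, (a₁ * f₁ m + a₂ * f₂ m + a₃ * f₃ m + a₄ * f₄ m) := by
        rw [finsum_add_distrib (finadd (finadd (fin a₁ h₁) (fin a₂ h₂)) (fin a₃ h₃)) (fin a₄ h₄),
          finsum_add_distrib (finadd (fin a₁ h₁) (fin a₂ h₂)) (fin a₃ h₃),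
          finsum_add_distrib (fin a₁ h₁) (fin a₂ h₂)]
        simp only [mul_finsum]
    _ = ∑ᶠ m, (b₁ * g₁ (σ m) + b₂ * g₂ (σ m)) := finsum_congr h
    _ = ∑ᶠ m, (b₁ * g₁ m + b₂ * g₂ m) :=
        finsum_comp_equiv σ (f := fun m => b₁ * g₁ m + b₂ * g₂ m)
    _ = _ := by
        rw [finsum_add_distrib (fin b₁ k₁) (fin b₂ k₂)]
        simp only [mul_finsum]

/-! ### Contiguous relations for the quadruple sums -/

/-- The exponent of `w` in the summand of `ssum`. -/
def sexp (n b c d : ℤ) (m : ℤ × ℤ × ℤ) : ℤ :=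
  n ^ 2 + m.1 ^ 2 + m.2.1 ^ 2 + m.2.2 ^ 2 - n * m.1 + m.1 * m.2.2 + b * m.1 + c * m.2.1
    + d * m.2.2

/-- The product of reciprocal q-factorials in the summand of `ssum`. -/
noncomputable def scoef (w : K) (n : ℤ) (m : ℤ × ℤ × ℤ) : K :=
  rpoch w (n - m.1) * rpoch w (n - m.2.2) * rpoch w m.2.2 * rpoch w m.2.1 * rpoch w (m.1 - m.2.1)

/-- The summand of `ssum`. -/
noncomputable def sterm (w : K) (n b c d : ℤ) (m : ℤ × ℤ × ℤ) : K :=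
  scoef w n m * w ^ sexp n b c d m

/-- For `n = n₁` fixed, the sum over `m = (n₂, n₃, n₄)` of
`w^(n₁²+n₂²+n₃²+n₄²-n₁n₂+n₂n₄+b n₂+c n₃+d n₄) / (w;w)_{n₁} * [n₁, n₂] [n₁, n₄] [n₂, n₃]`. -/
noncomputable def ssum (w : K) (n b c d : ℤ) : K := poch w n * ∑ᶠ m, sterm w n b c d m

lemma sterm_finite (w : K) (n b c d : ℤ) : (sterm w n b c d).support.Finite := by
  refine (Set.finite_Icc ((0 : ℤ), (0 : ℤ), (0 : ℤ)) (n, n, n)).subset fun m hm => ?_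
  obtain ⟨m2, m3, m4⟩ := m
  simp only [Set.mem_Icc, Prod.mk_le_mk]
  by_contra hcon
  refine hm ?_
  have : n - m2 < 0 ∨ n - m4 < 0 ∨ m4 < 0 ∨ m3 < 0 ∨ m2 - m3 < 0 := by omega
  rcases this with h | h | h | h | h <;> simp [sterm, scoef, rpoch_neg w h]

lemma ssum_neg (w : K) {n : ℤ} (hn : n < 0) (b c d : ℤ) : ssum w n b c d = 0 := by
  have : ∀ m, sterm w n b c d m = 0 := fun m => by
    have : n - m.2.2 < 0 ∨ m.2.2 < 0 := by omega
    rcases this with h | h <;> simp [sterm, scoef, rpoch_neg w h]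
  simp [ssum, this]

lemma ssum_zero (w : K) (b c d : ℤ) : ssum w 0 b c d = 1 := by
  have : ∀ m, m ≠ 0 → sterm w 0 b c d m = 0 := by
    rintro ⟨m2, m3, m4⟩ hm
    have : 0 - m2 < 0 ∨ 0 - m4 < 0 ∨ m4 < 0 ∨ m3 < 0 ∨ m2 - m3 < 0 := by
      by_contra hcon
      exact hm (Prod.ext_iff.2 ⟨by simp only [Prod.fst_zero]; omega, Prod.ext_iff.2
        ⟨by simp only [Prod.fst_zero, Prod.snd_zero]; omega,
          by simp only [Prod.snd_zero]; omega⟩⟩)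
    rcases this with h | h | h | h | h <;> simp only [sterm, scoef, rpoch_neg w h] <;> ring
  rw [ssum, finsum_eq_single _ 0 this]
  simp [sterm, scoef, sexp]

/-- A relation between the summands of `ssum` at a common level `n` on the left and at a
possibly different level `n'` on the right, summed over all indices. -/
lemma ssum_rel (w : K) {n n' : ℤ} (r : K) (hr : poch w n = r * poch w n') (δ : ℤ × ℤ × ℤ)
    (a₁ a₂ a₃ a₄ b₁ b₂ : K) {u₁ v₁ t₁ u₂ v₂ t₂ u₃ v₃ t₃ u₄ v₄ t₄ x₁ y₁ z₁ x₂ y₂ z₂ : ℤ}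
    (h : ∀ m, a₁ * sterm w n u₁ v₁ t₁ m + a₂ * sterm w n u₂ v₂ t₂ m + a₃ * sterm w n u₃ v₃ t₃ m
        + a₄ * sterm w n u₄ v₄ t₄ m
      = b₁ * sterm w n' x₁ y₁ z₁ (m - δ) + b₂ * sterm w n' x₂ y₂ z₂ (m - δ)) :
    a₁ * ssum w n u₁ v₁ t₁ + a₂ * ssum w n u₂ v₂ t₂ + a₃ * ssum w n u₃ v₃ t₃
        + a₄ * ssum w n u₄ v₄ t₄
      = r * (b₁ * ssum w n' x₁ y₁ z₁ + b₂ * ssum w n' x₂ y₂ z₂) := by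
  have := finsum_rel (Equiv.subRight δ) a₁ a₂ a₃ a₄ b₁ b₂ (sterm_finite w n u₁ v₁ t₁)
    (sterm_finite w n u₂ v₂ t₂) (sterm_finite w n u₃ v₃ t₃) (sterm_finite w n u₄ v₄ t₄)
    (sterm_finite w n' x₁ y₁ z₁) (sterm_finite w n' x₂ y₂ z₂) h
  simp only [ssum, hr]
  linear_combination r * poch w n' * this

lemma zpow_mul₂ {w : K} (hw : Generic w) {i j k : ℤ} (h : i = j + k) : w ^ i = w ^ j * w ^ k := by
  rw [h, zpow_add₀ hw.1]

/-! In the relations below, the digits in the name are the indices `i` for which `n_i` is lowered by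
one in passing from the summands on the left to those on the right. Each relation holds termwise:
the combination on the left produces the factors `1 - w^(...)` that `rpoch_rec` absorbs into
reciprocal q-factorials. -/

lemma relA3 {w : K} (hw : Generic w) (n b c d : ℤ) :
    ssum w n b c d - ssum w n b (c + 1) d
      = w ^ (1 + c) * (ssum w n b (c + 2) d - ssum w n (b + 1) (c + 1) d) := by
  have := ssum_rel w (n := n) (n' := n) 1 (by ring) (0, 1, 0) 1 (-1) 0 0 (w ^ (1 + c))
    (-w ^ (1 + c)) (u₁ := b) (v₁ := c) (t₁ := d) (u₂ := b) (v₂ := c + 1) (t₂ := d)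
    (u₃ := b) (v₃ := c + 1) (t₃ := d) (u₄ := b) (v₄ := c + 1) (t₄ := d)
    (x₁ := b) (y₁ := c + 2) (z₁ := d) (x₂ := b + 1) (y₂ := c + 1) (z₂ := d) ?_
  · linear_combination this
  rintro ⟨m2, m3, m4⟩
  have hc : scoef w n (m2, m3, m4) * (1 - w ^ m3)
      = scoef w n (m2, m3 - 1, m4) * (1 - w ^ (m2 - (m3 - 1))) := by
    have h1 := rpoch_rec hw m3
    have h2 := rpoch_rec hw (m2 - (m3 - 1))
    rw [show m2 - (m3 - 1) - 1 = m2 - m3 by ring] at h2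
    simp only [scoef, ← h1, ← h2]
    ring
  have e1 : w ^ sexp n b (c + 1) d (m2, m3, m4) = w ^ sexp n b c d (m2, m3, m4) * w ^ m3 :=
    zpow_mul₂ hw (by simp only [sexp]; ring)
  have e2 : w ^ sexp n b c d (m2, m3, m4) = w ^ (1 + c) * w ^ sexp n b (c + 2) d (m2, m3 - 1, m4) :=
    zpow_mul₂ hw (by simp only [sexp]; ring)
  have e3 : w ^ sexp n b (c + 2) d (m2, m3 - 1, m4) * w ^ (m2 - (m3 - 1))
      = w ^ sexp n (b + 1) (c + 1) d (m2, m3 - 1, m4) :=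
    (zpow_mul₂ hw (by simp only [sexp]; ring)).symm
  simp only [sterm, Prod.mk_sub_mk, sub_zero, ← e3, e1, e2]
  linear_combination w ^ (1 + c) * w ^ sexp n b (c + 2) d (m2, m3 - 1, m4) * hc

lemma relA4 {w : K} (hw : Generic w) (n b c d : ℤ) :
    ssum w n b c d - ssum w n b c (d + 1)
      = w ^ (1 + d) * (ssum w n (b + 1) c (d + 2) - w ^ n * ssum w n (b + 1) c (d + 1)) := by
  have := ssum_rel w (n := n) (n' := n) 1 (by ring) (0, 0, 1) 1 (-1) 0 0 (w ^ (1 + d))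
    (-w ^ (1 + d) * w ^ n) (u₁ := b) (v₁ := c) (t₁ := d) (u₂ := b) (v₂ := c) (t₂ := d + 1)
    (u₃ := b) (v₃ := c) (t₃ := d) (u₄ := b) (v₄ := c) (t₄ := d)
    (x₁ := b + 1) (y₁ := c) (z₁ := d + 2) (x₂ := b + 1) (y₂ := c) (z₂ := d + 1) ?_
  · linear_combination this
  rintro ⟨m2, m3, m4⟩
  have hc : scoef w n (m2, m3, m4) * (1 - w ^ m4)
      = scoef w n (m2, m3, m4 - 1) * (1 - w ^ (n - (m4 - 1))) := by
    have h1 := rpoch_rec hw m4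
    have h2 := rpoch_rec hw (n - (m4 - 1))
    rw [show n - (m4 - 1) - 1 = n - m4 by ring] at h2
    simp only [scoef, ← h1, ← h2]
    ring
  have e1 : w ^ sexp n b c (d + 1) (m2, m3, m4) = w ^ sexp n b c d (m2, m3, m4) * w ^ m4 :=
    zpow_mul₂ hw (by simp only [sexp]; ring)
  have e2 : w ^ sexp n b c d (m2, m3, m4)
      = w ^ (1 + d) * w ^ sexp n (b + 1) c (d + 2) (m2, m3, m4 - 1) :=
    zpow_mul₂ hw (by simp only [sexp]; ring)
  have e3 : w ^ n * w ^ sexp n (b + 1) c (d + 1) (m2, m3, m4 - 1)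
      = w ^ sexp n (b + 1) c (d + 2) (m2, m3, m4 - 1) * w ^ (n - (m4 - 1)) := by
    rw [← zpow_add₀ hw.1, ← zpow_add₀ hw.1]; congr 1; simp only [sexp]; ring
  simp only [sterm, Prod.mk_sub_mk, sub_zero, e1, e2]
  linear_combination w ^ (1 + d) * w ^ sexp n (b + 1) c (d + 2) (m2, m3, m4 - 1) * hc
    + w ^ (1 + d) * scoef w n (m2, m3, m4 - 1) * e3

lemma relA2 {w : K} (hw : Generic w) (n b c d : ℤ) :
    w ^ n * (ssum w n b (c + 1) d - ssum w n (b + 1) c d)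
      = w ^ (1 + b) *
        (ssum w n (b + 2) (c + 1) (d + 1) - w ^ n * ssum w n (b + 1) (c + 1) (d + 1)) := by
  have := ssum_rel w (n := n) (n' := n) 1 (by ring) (1, 0, 0) (w ^ n) (-w ^ n) 0 0 (w ^ (1 + b))
    (-w ^ (1 + b) * w ^ n) (u₁ := b) (v₁ := c + 1) (t₁ := d) (u₂ := b + 1) (v₂ := c) (t₂ := d)
    (u₃ := b) (v₃ := c) (t₃ := d) (u₄ := b) (v₄ := c) (t₄ := d)
    (x₁ := b + 2) (y₁ := c + 1) (z₁ := d + 1) (x₂ := b + 1) (y₂ := c + 1) (z₂ := d + 1) ?_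
  · linear_combination this
  rintro ⟨m2, m3, m4⟩
  have hc : scoef w n (m2, m3, m4) * (1 - w ^ (m2 - m3))
      = scoef w n (m2 - 1, m3, m4) * (1 - w ^ (n - (m2 - 1))) := by
    have h1 := rpoch_rec hw (m2 - m3)
    have h2 := rpoch_rec hw (n - (m2 - 1))
    rw [show n - (m2 - 1) - 1 = n - m2 by ring] at h2
    simp only [scoef, show m2 - 1 - m3 = m2 - m3 - 1 by ring, ← h1, ← h2]
    ring
  have e1 : w ^ sexp n (b + 1) c d (m2, m3, m4)
      = w ^ sexp n b (c + 1) d (m2, m3, m4) * w ^ (m2 - m3) :=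
    zpow_mul₂ hw (by simp only [sexp]; ring)
  have e2 : w ^ n * w ^ sexp n b (c + 1) d (m2, m3, m4)
      = w ^ (1 + b) * w ^ sexp n (b + 2) (c + 1) (d + 1) (m2 - 1, m3, m4) := by
    rw [← zpow_add₀ hw.1, ← zpow_add₀ hw.1]; congr 1; simp only [sexp]; ring
  have e3 : w ^ n * w ^ sexp n (b + 1) (c + 1) (d + 1) (m2 - 1, m3, m4)
      = w ^ sexp n (b + 2) (c + 1) (d + 1) (m2 - 1, m3, m4) * w ^ (n - (m2 - 1)) := by
    rw [← zpow_add₀ hw.1, ← zpow_add₀ hw.1]; congr 1; simp only [sexp]; ring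
  simp only [sterm, Prod.mk_sub_mk, sub_zero, e1]
  linear_combination w ^ (1 + b) * w ^ sexp n (b + 2) (c + 1) (d + 1) (m2 - 1, m3, m4) * hc
    + scoef w n (m2, m3, m4) * (1 - w ^ (m2 - m3)) * e2
    + w ^ (1 + b) * scoef w n (m2 - 1, m3, m4) * e3

lemma relA23 {w : K} (hw : Generic w) (n b c d : ℤ) :
    w ^ n * (ssum w n b c d - ssum w n b (c + 1) d)
      = w ^ (2 + b + c) *
        (ssum w n (b + 2) (c + 2) (d + 1) - w ^ n * ssum w n (b + 1) (c + 2) (d + 1)) := by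
  have := ssum_rel w (n := n) (n' := n) 1 (by ring) (1, 1, 0) (w ^ n) (-w ^ n) 0 0
    (w ^ (2 + b + c)) (-w ^ (2 + b + c) * w ^ n)
    (u₁ := b) (v₁ := c) (t₁ := d) (u₂ := b) (v₂ := c + 1) (t₂ := d)
    (u₃ := b) (v₃ := c) (t₃ := d) (u₄ := b) (v₄ := c) (t₄ := d)
    (x₁ := b + 2) (y₁ := c + 2) (z₁ := d + 1) (x₂ := b + 1) (y₂ := c + 2) (z₂ := d + 1) ?_
  · linear_combination this
  rintro ⟨m2, m3, m4⟩
  have hc : scoef w n (m2, m3, m4) * (1 - w ^ m3)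
      = scoef w n (m2 - 1, m3 - 1, m4) * (1 - w ^ (n - (m2 - 1))) := by
    have h1 := rpoch_rec hw m3
    have h2 := rpoch_rec hw (n - (m2 - 1))
    rw [show n - (m2 - 1) - 1 = n - m2 by ring] at h2
    simp only [scoef, show m2 - 1 - (m3 - 1) = m2 - m3 by ring, ← h1, ← h2]
    ring
  have e1 : w ^ sexp n b (c + 1) d (m2, m3, m4) = w ^ sexp n b c d (m2, m3, m4) * w ^ m3 :=
    zpow_mul₂ hw (by simp only [sexp]; ring)
  have e2 : w ^ n * w ^ sexp n b c d (m2, m3, m4)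
      = w ^ (2 + b + c) * w ^ sexp n (b + 2) (c + 2) (d + 1) (m2 - 1, m3 - 1, m4) := by
    rw [← zpow_add₀ hw.1, ← zpow_add₀ hw.1]; congr 1; simp only [sexp]; ring
  have e3 : w ^ n * w ^ sexp n (b + 1) (c + 2) (d + 1) (m2 - 1, m3 - 1, m4)
      = w ^ sexp n (b + 2) (c + 2) (d + 1) (m2 - 1, m3 - 1, m4) * w ^ (n - (m2 - 1)) := by
    rw [← zpow_add₀ hw.1, ← zpow_add₀ hw.1]; congr 1; simp only [sexp]; ring
  simp only [sterm, Prod.mk_sub_mk, sub_zero, e1]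
  linear_combination w ^ (2 + b + c) * w ^ sexp n (b + 2) (c + 2) (d + 1) (m2 - 1, m3 - 1, m4) * hc
    + scoef w n (m2, m3, m4) * (1 - w ^ m3) * e2
    + w ^ (2 + b + c) * scoef w n (m2 - 1, m3 - 1, m4) * e3

lemma relA1 {w : K} (hw : Generic w) {n : ℤ} (hn : 0 ≤ n) (b c d : ℤ) :
    ssum w (n + 1) (b + 1) c (d + 1) - w ^ (n + 1) * ssum w (n + 1) b c (d + 1)
        - w ^ (n + 1) * ssum w (n + 1) (b + 1) c d + w ^ (n + 1) * w ^ (n + 1) * ssum w (n + 1) b c d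
      = (1 - w ^ (n + 1)) * (w * w ^ n * w ^ n * ssum w n b c (d + 1)) := by
  have := ssum_rel w (n := n + 1) (n' := n) _ (poch_succ w hn) (0, 0, 0) 1 (-w ^ (n + 1))
    (-w ^ (n + 1)) (w ^ (n + 1) * w ^ (n + 1)) (w * w ^ n * w ^ n) 0
    (u₁ := b + 1) (v₁ := c) (t₁ := d + 1) (u₂ := b) (v₂ := c) (t₂ := d + 1)
    (u₃ := b + 1) (v₃ := c) (t₃ := d) (u₄ := b) (v₄ := c) (t₄ := d)
    (x₁ := b) (y₁ := c) (z₁ := d + 1) (x₂ := b) (y₂ := c) (z₂ := d) ?_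
  · linear_combination this
  rintro ⟨m2, m3, m4⟩
  have hc : scoef w (n + 1) (m2, m3, m4) * (1 - w ^ (n + 1 - m2)) * (1 - w ^ (n + 1 - m4))
      = scoef w n (m2, m3, m4) := by
    have h1 := rpoch_rec hw (n + 1 - m2)
    have h2 := rpoch_rec hw (n + 1 - m4)
    rw [show n + 1 - m2 - 1 = n - m2 by ring] at h1
    rw [show n + 1 - m4 - 1 = n - m4 by ring] at h2
    simp only [scoef, ← h1, ← h2]
    ring
  have e1 : w ^ sexp (n + 1) b c (d + 1) (m2, m3, m4)
      = w ^ sexp (n + 1) b c d (m2, m3, m4) * w ^ m4 :=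
    zpow_mul₂ hw (by simp only [sexp]; ring)
  have e2 : w ^ sexp (n + 1) (b + 1) c d (m2, m3, m4)
      = w ^ sexp (n + 1) b c d (m2, m3, m4) * w ^ m2 :=
    zpow_mul₂ hw (by simp only [sexp]; ring)
  have e3 : w ^ sexp (n + 1) (b + 1) c (d + 1) (m2, m3, m4)
      = w ^ sexp (n + 1) b c d (m2, m3, m4) * w ^ m2 * w ^ m4 := by
    rw [← e2]; exact zpow_mul₂ hw (by simp only [sexp]; ring)
  have e4 : w * w ^ n * w ^ n * w ^ sexp n b c (d + 1) (m2, m3, m4)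
      = w ^ sexp (n + 1) b c d (m2, m3, m4) * w ^ m2 * w ^ m4 := by
    rw [← e3]
    nth_rewrite 1 [← zpow_one w]
    simp only [← zpow_add₀ hw.1]; congr 1; simp only [sexp]; ring
  have x1 : w ^ (n + 1) = w ^ (n + 1 - m2) * w ^ m2 := zpow_mul₂ hw (by ring)
  have x2 : w ^ (n + 1) = w ^ (n + 1 - m4) * w ^ m4 := zpow_mul₂ hw (by ring)
  simp only [sterm, Prod.mk_sub_mk, sub_zero, e1, e2, e3, ← hc]
  generalize w ^ sexp (n + 1) b c d (m2, m3, m4) = E at *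
  generalize scoef w (n + 1) (m2, m3, m4) = C at *
  linear_combination -C * (1 - w ^ (n + 1 - m2)) * (1 - w ^ (n + 1 - m4)) * e4
    + C * E * (w ^ (n + 1) - w ^ m4) * x1 + C * E * w ^ m2 * (w ^ (n + 1 - m2) - 1) * x2

lemma relA12 {w : K} (hw : Generic w) {n : ℤ} (hn : 0 ≤ n) (b c d : ℤ) :
    ssum w (n + 1) b (c + 1) (d + 1) - w ^ (n + 1) * ssum w (n + 1) b (c + 1) d
        - ssum w (n + 1) (b + 1) c (d + 1) + w ^ (n + 1) * ssum w (n + 1) (b + 1) c d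
      = (1 - w ^ (n + 1)) * (w ^ (1 + b) * w ^ n * ssum w n (b + 1) (c + 1) (d + 2)) := by
  have := ssum_rel w (n := n + 1) (n' := n) _ (poch_succ w hn) (1, 0, 0) 1 (-w ^ (n + 1))
    (-1) (w ^ (n + 1)) (w ^ (1 + b) * w ^ n) 0
    (u₁ := b) (v₁ := c + 1) (t₁ := d + 1) (u₂ := b) (v₂ := c + 1) (t₂ := d)
    (u₃ := b + 1) (v₃ := c) (t₃ := d + 1) (u₄ := b + 1) (v₄ := c) (t₄ := d)
    (x₁ := b + 1) (y₁ := c + 1) (z₁ := d + 2) (x₂ := b) (y₂ := c) (z₂ := d) ?_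
  · linear_combination this
  rintro ⟨m2, m3, m4⟩
  have hc : scoef w (n + 1) (m2, m3, m4) * (1 - w ^ (m2 - m3)) * (1 - w ^ (n + 1 - m4))
      = scoef w n (m2 - 1, m3, m4) := by
    have h1 := rpoch_rec hw (m2 - m3)
    have h2 := rpoch_rec hw (n + 1 - m4)
    rw [show n + 1 - m4 - 1 = n - m4 by ring] at h2
    simp only [scoef, show m2 - 1 - m3 = m2 - m3 - 1 by ring,
      show n - (m2 - 1) = n + 1 - m2 by ring, ← h1, ← h2]
    ring
  have e1 : w ^ sexp (n + 1) b (c + 1) (d + 1) (m2, m3, m4)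
      = w ^ sexp (n + 1) b (c + 1) d (m2, m3, m4) * w ^ m4 :=
    zpow_mul₂ hw (by simp only [sexp]; ring)
  have e2 : w ^ sexp (n + 1) (b + 1) c d (m2, m3, m4)
      = w ^ sexp (n + 1) b (c + 1) d (m2, m3, m4) * w ^ (m2 - m3) :=
    zpow_mul₂ hw (by simp only [sexp]; ring)
  have e3 : w ^ sexp (n + 1) (b + 1) c (d + 1) (m2, m3, m4)
      = w ^ sexp (n + 1) b (c + 1) d (m2, m3, m4) * w ^ (m2 - m3) * w ^ m4 := by
    rw [← e2]; exact zpow_mul₂ hw (by simp only [sexp]; ring)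
  have e4 : w ^ (1 + b) * w ^ n * w ^ sexp n (b + 1) (c + 1) (d + 2) (m2 - 1, m3, m4)
      = w ^ sexp (n + 1) b (c + 1) d (m2, m3, m4) * w ^ m4 := by
    rw [← e1]
    simp only [← zpow_add₀ hw.1]; congr 1; simp only [sexp]; ring
  have x2 : w ^ (n + 1) = w ^ (n + 1 - m4) * w ^ m4 := zpow_mul₂ hw (by ring)
  simp only [sterm, Prod.mk_sub_mk, sub_zero, e1, e2, e3, ← hc]
  generalize w ^ sexp (n + 1) b (c + 1) d (m2, m3, m4) = E at *
  generalize scoef w (n + 1) (m2, m3, m4) = C at *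
  linear_combination -C * (1 - w ^ (m2 - m3)) * (1 - w ^ (n + 1 - m4)) * e4
    - C * E * (1 - w ^ (m2 - m3)) * x2

lemma relA14 {w : K} (hw : Generic w) {n : ℤ} (hn : 0 ≤ n) (b c d : ℤ) :
    ssum w (n + 1) (b + 1) c d - w ^ (n + 1) * ssum w (n + 1) b c d
        - ssum w (n + 1) (b + 1) c (d + 1) + w ^ (n + 1) * ssum w (n + 1) b c (d + 1)
      = (1 - w ^ (n + 1)) * (w ^ (2 + d) * w ^ n * w ^ n * ssum w n (b + 1) c (d + 2)) := by
  have := ssum_rel w (n := n + 1) (n' := n) _ (poch_succ w hn) (0, 0, 1) 1 (-w ^ (n + 1))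
    (-1) (w ^ (n + 1)) (w ^ (2 + d) * w ^ n * w ^ n) 0
    (u₁ := b + 1) (v₁ := c) (t₁ := d) (u₂ := b) (v₂ := c) (t₂ := d)
    (u₃ := b + 1) (v₃ := c) (t₃ := d + 1) (u₄ := b) (v₄ := c) (t₄ := d + 1)
    (x₁ := b + 1) (y₁ := c) (z₁ := d + 2) (x₂ := b) (y₂ := c) (z₂ := d) ?_
  · linear_combination this
  rintro ⟨m2, m3, m4⟩
  have hc : scoef w (n + 1) (m2, m3, m4) * (1 - w ^ (n + 1 - m2)) * (1 - w ^ m4)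
      = scoef w n (m2, m3, m4 - 1) := by
    have h1 := rpoch_rec hw (n + 1 - m2)
    have h2 := rpoch_rec hw m4
    rw [show n + 1 - m2 - 1 = n - m2 by ring] at h1
    simp only [scoef, show n - (m4 - 1) = n + 1 - m4 by ring, ← h1, ← h2]
    ring
  have e1 : w ^ sexp (n + 1) b c (d + 1) (m2, m3, m4)
      = w ^ sexp (n + 1) b c d (m2, m3, m4) * w ^ m4 :=
    zpow_mul₂ hw (by simp only [sexp]; ring)
  have e2 : w ^ sexp (n + 1) (b + 1) c d (m2, m3, m4)
      = w ^ sexp (n + 1) b c d (m2, m3, m4) * w ^ m2 :=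
    zpow_mul₂ hw (by simp only [sexp]; ring)
  have e3 : w ^ sexp (n + 1) (b + 1) c (d + 1) (m2, m3, m4)
      = w ^ sexp (n + 1) b c d (m2, m3, m4) * w ^ m2 * w ^ m4 := by
    rw [← e2]; exact zpow_mul₂ hw (by simp only [sexp]; ring)
  have e4 : w ^ (2 + d) * w ^ n * w ^ n * w ^ sexp n (b + 1) c (d + 2) (m2, m3, m4 - 1)
      = w ^ sexp (n + 1) b c d (m2, m3, m4) * w ^ m2 := by
    rw [← e2]
    simp only [← zpow_add₀ hw.1]; congr 1; simp only [sexp]; ring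
  have x1 : w ^ (n + 1) = w ^ (n + 1 - m2) * w ^ m2 := zpow_mul₂ hw (by ring)
  simp only [sterm, Prod.mk_sub_mk, sub_zero, e1, e2, e3, ← hc]
  generalize w ^ sexp (n + 1) b c d (m2, m3, m4) = E at *
  generalize scoef w (n + 1) (m2, m3, m4) = C at *
  linear_combination -C * (1 - w ^ (n + 1 - m2)) * (1 - w ^ m4) * e4
    - C * E * (1 - w ^ m4) * x1

lemma relA123 {w : K} (hw : Generic w) {n : ℤ} (hn : 0 ≤ n) (b c d : ℤ) :
    ssum w (n + 1) b c (d + 1) - w ^ (n + 1) * ssum w (n + 1) b c d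
        - ssum w (n + 1) b (c + 1) (d + 1) + w ^ (n + 1) * ssum w (n + 1) b (c + 1) d
      = (1 - w ^ (n + 1)) * (w ^ (2 + b + c) * w ^ n * ssum w n (b + 1) (c + 2) (d + 2)) := by
  have := ssum_rel w (n := n + 1) (n' := n) _ (poch_succ w hn) (1, 1, 0) 1 (-w ^ (n + 1))
    (-1) (w ^ (n + 1)) (w ^ (2 + b + c) * w ^ n) 0
    (u₁ := b) (v₁ := c) (t₁ := d + 1) (u₂ := b) (v₂ := c) (t₂ := d)
    (u₃ := b) (v₃ := c + 1) (t₃ := d + 1) (u₄ := b) (v₄ := c + 1) (t₄ := d)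
    (x₁ := b + 1) (y₁ := c + 2) (z₁ := d + 2) (x₂ := b) (y₂ := c) (z₂ := d) ?_
  · linear_combination this
  rintro ⟨m2, m3, m4⟩
  have hc : scoef w (n + 1) (m2, m3, m4) * (1 - w ^ m3) * (1 - w ^ (n + 1 - m4))
      = scoef w n (m2 - 1, m3 - 1, m4) := by
    have h1 := rpoch_rec hw m3
    have h2 := rpoch_rec hw (n + 1 - m4)
    rw [show n + 1 - m4 - 1 = n - m4 by ring] at h2
    simp only [scoef, show m2 - 1 - (m3 - 1) = m2 - m3 by ring,
      show n - (m2 - 1) = n + 1 - m2 by ring, ← h1, ← h2]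
    ring
  have e1 : w ^ sexp (n + 1) b c (d + 1) (m2, m3, m4)
      = w ^ sexp (n + 1) b c d (m2, m3, m4) * w ^ m4 :=
    zpow_mul₂ hw (by simp only [sexp]; ring)
  have e2 : w ^ sexp (n + 1) b (c + 1) d (m2, m3, m4)
      = w ^ sexp (n + 1) b c d (m2, m3, m4) * w ^ m3 :=
    zpow_mul₂ hw (by simp only [sexp]; ring)
  have e3 : w ^ sexp (n + 1) b (c + 1) (d + 1) (m2, m3, m4)
      = w ^ sexp (n + 1) b c d (m2, m3, m4) * w ^ m3 * w ^ m4 := by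
    rw [← e2]; exact zpow_mul₂ hw (by simp only [sexp]; ring)
  have e4 : w ^ (2 + b + c) * w ^ n * w ^ sexp n (b + 1) (c + 2) (d + 2) (m2 - 1, m3 - 1, m4)
      = w ^ sexp (n + 1) b c d (m2, m3, m4) * w ^ m4 := by
    rw [← e1]
    simp only [← zpow_add₀ hw.1]; congr 1; simp only [sexp]; ring
  have x2 : w ^ (n + 1) = w ^ (n + 1 - m4) * w ^ m4 := zpow_mul₂ hw (by ring)
  simp only [sterm, Prod.mk_sub_mk, sub_zero, e1, e2, e3, ← hc]
  generalize w ^ sexp (n + 1) b c d (m2, m3, m4) = E at *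
  generalize scoef w (n + 1) (m2, m3, m4) = C at *
  linear_combination -C * (1 - w ^ m3) * (1 - w ^ (n + 1 - m4)) * e4
    - C * E * (1 - w ^ m3) * x2

end Field
end Macmahon

namespace Macmahon

section Field

variable {K : Type*} [Field K]

/-! ### The three recurrences needed for the Corteel-Welsh system -/

lemma zpow_succ' {w : K} (hw : Generic w) (n : ℤ) : w ^ (n + 1) = w * w ^ n := by
  rw [zpow_add_one₀ hw.1, mul_comm]

/-- The coefficient form of the equation for the profile `(3,1,1)`, simplified by means of the one
for `(4,1,0)`. -/
lemma rec311 {w : K} (hw : Generic w) {n : ℤ} (hn : 0 ≤ n) :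
    ssum w (n + 1) 0 1 0 - w * w ^ n * ssum w (n + 1) 0 0 0 - w * (w ^ n) ^ 2 * ssum w n 0 0 0
      - w ^ 3 * (w ^ n) ^ 4 * ssum w n 1 1 1 - w ^ 2 * (w ^ n) ^ 3 * ssum w n 0 1 0
      - w * w ^ n * ssum w n 1 1 1 = 0 := by
  have hx := hw.ne (n := n + 1) (by omega)
  have hy : w ^ n ≠ 0 := zpow_ne_zero n hw.1
  have r1 := relA4 hw n 0 1 0
  have r2 := relA4 hw n 0 0 0
  have r3 := relA14 hw hn 1 1 0
  have r4 := relA2 hw (n + 1) 0 0 0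
  have r5 := relA1 hw hn 1 1 0
  have r6 := relA14 hw hn 0 0 0
  have r7 := relA2 hw n 0 0 1
  have r8 := relA1 hw hn 0 0 0
  simp only [zpow_succ' hw n, Int.reduceAdd, zpow_ofNat] at *
  generalize w ^ n = y at *
  have h0 : w * y * (1 - w * y) ≠ 0 := mul_ne_zero (mul_ne_zero hw.1 hy) hx
  refine (mul_eq_zero.1 (?_ : w * y * (1 - w * y) * _ = 0)).resolve_left h0
  linear_combination (-(w ^ 2 * y ^ 3) * (w * y * (1 - w * y))) * r1
    - w * y ^ 2 * (w * y * (1 - w * y)) * r2 + w * (w * y) * r3 + (1 - w * y) * r4 + w * r5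
    + w * y * r6 - w ^ 2 * y ^ 2 * (w * y * (1 - w * y)) * r7 + w * y * r8

/-- The coefficient form of the equation for the profile `(4,1,0)`. -/
lemma rec410 {w : K} (hw : Generic w) {n : ℤ} (hn : 0 ≤ n) :
    ssum w (n + 1) 1 1 1 - (w * w ^ n) ^ 2 * ssum w (n + 1) 0 1 0
      - w ^ 2 * (w ^ n) ^ 3 * ssum w n 0 0 0 - w ^ 3 * (w ^ n) ^ 4 * ssum w n 0 1 0
      - w ^ 4 * (w ^ n) ^ 5 * ssum w n 1 1 1 - w ^ 2 * (w ^ n) ^ 3 * ssum w n 1 1 1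
      - w * (w ^ n) ^ 2 * ssum w n 0 1 0 = 0 := by
  have hx := hw.ne (n := n + 1) (by omega)
  have hy : w ^ n ≠ 0 := zpow_ne_zero n hw.1
  have r1 := relA4 hw n 0 1 0
  have r2 := relA2 hw n 0 0 1
  have r3 := relA12 hw hn 1 0 0
  have r4 := relA14 hw hn 0 1 0
  have r5 := relA1 hw hn 0 0 0
  have r6 := relA123 hw hn 0 0 0
  have r7 := relA3 hw n 1 0 2
  have r8 := relA1 hw hn 1 0 0
  have r9 := relA4 hw n 0 0 0
  simp only [zpow_succ' hw n, Int.reduceAdd, zpow_ofNat] at *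
  generalize w ^ n = y at *
  refine (mul_eq_zero.1 (?_ : y * (1 - w * y) * _ = 0)).resolve_left (mul_ne_zero hy hx)
  linear_combination (-(w * y ^ 2 + w ^ 3 * y ^ 4) * y * (1 - w * y)) * r1
    - (w * y ^ 2 + w ^ 3 * y ^ 4) * (1 - w * y) * r2 + y * r3 + w * y ^ 2 * r4 + w * y ^ 2 * r5
    + w ^ 2 * y ^ 3 * r6 - w ^ 3 * y ^ 3 * y * (1 - w * y) * r7 + y * r8
    - w ^ 2 * y ^ 3 * y * (1 - w * y) * r9

/-- The coefficient form of the equation for the profile `(2,2,1)`. -/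
lemma rec221 {w : K} (hw : Generic w) {n : ℤ} (hn : 0 ≤ n) :
    ssum w (n + 1 + 1) 0 0 0 - w ^ 2 * w ^ n * ssum w (n + 1 + 1) 0 1 0
      - w ^ 2 * w ^ n * ssum w (n + 1 + 1) 0 0 0 + (w ^ 2 * w ^ n) ^ 2 * ssum w (n + 1 + 1) 0 0 0
      - w * (w * w ^ n) ^ 2 * ssum w (n + 1) 0 0 0 - w * (w * w ^ n) ^ 2 * ssum w (n + 1) 0 1 0
      - w ^ 3 * (w ^ n) ^ 3 * ssum w n 0 0 0 - w ^ 4 * (w ^ n) ^ 4 * ssum w n 0 1 0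
      - w ^ 5 * (w ^ n) ^ 5 * ssum w n 1 1 1 = 0 := by
  have hn' : 0 ≤ n + 1 := by omega
  have hx := hw.ne (n := n + 1 + 1) (by omega)
  have hx' := hw.ne (n := n + 1) (by omega)
  have hy : w ^ n ≠ 0 := zpow_ne_zero n hw.1
  have r1 := rec311 hw hn'
  have r2 := rec410 hw hn
  have r3 := relA4 hw (n + 1) 0 2 0
  have r4 := relA14 hw hn 0 1 0
  have r5 := relA2 hw (n + 1) 0 1 0
  have r6 := relA2 hw (n + 1) 0 1 1
  have r7 := relA2 hw (n + 1) 0 0 0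
  have r8 := relA4 hw n 0 1 0
  have r9 := relA14 hw hn' 1 2 0
  have r10 := relA1 hw hn 0 1 0
  have r11 := relA12 hw hn 0 0 0
  have r12 := relA3 hw (n + 1) 1 0 1
  have r13 := relA23 hw (n + 1 + 1) 0 0 0
  have r14 := relA23 hw (n + 1) 0 0 0
  have r15 := relA1 hw hn' 1 2 0
  simp only [zpow_succ' hw (n + 1), zpow_succ' hw n, Int.reduceAdd, zpow_ofNat] at *
  generalize w ^ n = y at *
  have h0 : w * y * (1 - w * y) * (w * (1 - w * (w * y))) ≠ 0 :=
    mul_ne_zero (mul_ne_zero (mul_ne_zero hw.1 hy) hx') (mul_ne_zero hw.1 hx)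
  refine (mul_eq_zero.1 (?_ : w * y * (1 - w * y) * (w * (1 - w * (w * y))) * _ = 0)).resolve_left h0
  linear_combination (w * y * (1 - w * y) * (w * (1 - w * (w * y)))) * (1 - w ^ 2 * y) * r1
    + (w * y * (1 - w * y) * (w * (1 - w * (w * y)))) * w * r2
    - (w * y * (1 - w * y) * (w * (1 - w * (w * y)))) * w ^ 6 * y ^ 3 * r3
    - w * y * (1 - w ^ 2 * y) * (w ^ 3 * y - w ^ 7 * y ^ 3 + w ^ 8 * y ^ 4) * r4
    + (w * y * (1 - w * y) * (w * (1 - w * (w * y)))) * w ^ 5 * y ^ 2 * r5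
    - (w * y * (1 - w * y) * (w * (1 - w * (w * y)))) * w ^ 5 * y ^ 2 * r6
    - (w * y * (1 - w * y) * (w * (1 - w * (w * y)))) * (w ^ 2 * y + w ^ 7 * y ^ 4) * r7
    + (w * y * (1 - w * y) * (w * (1 - w * (w * y)))) * w ^ 2 * y ^ 2 * r8
    + w ^ 4 * y * (1 - w * y) * r9 - w ^ 3 * y * (1 - w ^ 2 * y) * r10
    - (w * y * (1 - w * y) * (w * (1 - w * (w * y)))) * (w ^ 2 * y + w ^ 7 * y ^ 4) * r11
    - (w * y * (1 - w * y) * (w * (1 - w * (w * y)))) * (w ^ 2 * y + w ^ 7 * y ^ 4) * r12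
    + (1 - w * y) * (1 - w ^ 2 * y) * r13
    - (w * y * (1 - w * y) * (w * (1 - w * (w * y)))) * w ^ 4 * y ^ 2 * r14
    + w ^ 2 * (1 - w * y) * r15
lemma rec311_all {w : K} (hw : Generic w) (n : ℤ) :
    ssum w (n + 1) 0 1 0 - w * w ^ n * ssum w (n + 1) 0 0 0 - w * (w ^ n) ^ 2 * ssum w n 0 0 0
      - w ^ 3 * (w ^ n) ^ 4 * ssum w n 1 1 1 - w ^ 2 * (w ^ n) ^ 3 * ssum w n 0 1 0
      - w * w ^ n * ssum w n 1 1 1 = 0 := by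
  rcases lt_trichotomy n (-1) with h | rfl | h
  · simp [ssum_neg w (show n + 1 < 0 by omega), ssum_neg w (show n < 0 by omega)]
  · simp [ssum_neg w (show (-1 : ℤ) < 0 by omega), ssum_zero, hw.1]
  · exact rec311 hw (by omega)

lemma rec410_all {w : K} (hw : Generic w) (n : ℤ) :
    ssum w (n + 1) 1 1 1 - (w * w ^ n) ^ 2 * ssum w (n + 1) 0 1 0
      - w ^ 2 * (w ^ n) ^ 3 * ssum w n 0 0 0 - w ^ 3 * (w ^ n) ^ 4 * ssum w n 0 1 0
      - w ^ 4 * (w ^ n) ^ 5 * ssum w n 1 1 1 - w ^ 2 * (w ^ n) ^ 3 * ssum w n 1 1 1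
      - w * (w ^ n) ^ 2 * ssum w n 0 1 0 = 0 := by
  rcases lt_trichotomy n (-1) with h | rfl | h
  · simp [ssum_neg w (show n + 1 < 0 by omega), ssum_neg w (show n < 0 by omega)]
  · simp [ssum_neg w (show (-1 : ℤ) < 0 by omega), ssum_zero, hw.1]
  · exact rec410 hw (by omega)

lemma rec221_one {w : K} (hw : Generic w) :
    ssum w 1 0 0 0 - w * ssum w 1 0 1 0 - w * ssum w 1 0 0 0 + w ^ 2 * ssum w 1 0 0 0
      - w - w = 0 := by
  have h1 : 1 - w ≠ 0 := by simpa using hw.ne (n := 1) (by omega)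
  have r1 := rec311 hw le_rfl
  have r2 := relA14 hw le_rfl 1 2 0
  have r3 := relA23 hw 1 0 0 0
  have r4 := relA1 hw le_rfl 1 2 0
  simp only [ssum_zero, Int.reduceAdd, zpow_ofNat, pow_one, pow_zero] at *
  refine (mul_eq_zero.1 (?_ : w * (1 - w) * _ = 0)).resolve_left (mul_ne_zero hw.1 h1)
  linear_combination w * (1 - w) * (1 - w) * r1 + w ^ 3 * r2 + (1 - w) * r3 + w ^ 2 * r4

lemma rec221_all {w : K} (hw : Generic w) (n : ℤ) :
    ssum w (n + 1 + 1) 0 0 0 - w ^ 2 * w ^ n * ssum w (n + 1 + 1) 0 1 0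
      - w ^ 2 * w ^ n * ssum w (n + 1 + 1) 0 0 0 + (w ^ 2 * w ^ n) ^ 2 * ssum w (n + 1 + 1) 0 0 0
      - w * (w * w ^ n) ^ 2 * ssum w (n + 1) 0 0 0 - w * (w * w ^ n) ^ 2 * ssum w (n + 1) 0 1 0
      - w ^ 3 * (w ^ n) ^ 3 * ssum w n 0 0 0 - w ^ 4 * (w ^ n) ^ 4 * ssum w n 0 1 0
      - w ^ 5 * (w ^ n) ^ 5 * ssum w n 1 1 1 = 0 := by
  have hw0 := hw.1
  rcases (show n < -2 ∨ n = -2 ∨ n = -1 ∨ 0 ≤ n by omega) with h | rfl | rfl | h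
  · simp [ssum_neg w (show n + 1 + 1 < 0 by omega), ssum_neg w (show n + 1 < 0 by omega),
      ssum_neg w (show n < 0 by omega)]
  · simp [ssum_neg w (show (-1 : ℤ) < 0 by omega), ssum_neg w (show (-2 : ℤ) < 0 by omega),
      ssum_zero, hw0, zpow_neg]
  · have := rec221_one hw
    simp only [Int.reduceNeg, Int.reduceAdd, ssum_neg w (show (-1 : ℤ) < 0 by omega), ssum_zero,
      zpow_neg, zpow_one, show w ^ 2 * w⁻¹ = w by field_simp, mul_inv_cancel₀ hw0]
    linear_combination this
  · exact rec221 hw h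

/-! ### The Corteel-Welsh system -/

/-- The coefficient of `z^n` in the function `G_c(z)` attached to the level 5 profile `c = (2,2,1)`;
in the names below the profile is likewise written as a suffix. -/
noncomputable def g221 (w : K) (n : ℤ) : K := ssum w n 0 0 0

/-- The coefficient of `z^n` in `G_c(z)` for the profile `c = (3,1,1)`. -/
noncomputable def g311 (w : K) (n : ℤ) : K := ssum w n 0 1 0

/-- The coefficient of `z^n` in `G_c(z)` for the profile `c = (4,1,0)`. -/
noncomputable def g410 (w : K) (n : ℤ) : K := ssum w n 1 1 1

/-- The coefficient of `z^n` in `G_c(z)` for the profile `c = (5,0,0)`. -/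
noncomputable def g500 (w : K) (n : ℤ) : K := w ^ n * ssum w n 1 1 1

/-- The coefficient of `z^n` in `G_c(z)` for the profile `c = (3,0,2)`. -/
noncomputable def g302 (w : K) (n : ℤ) : K :=
  w ^ n * ssum w n 0 0 0 + w * (w ^ (n - 1)) ^ 2 * ssum w (n - 1) 0 1 0
    + w ^ 2 * (w ^ (n - 1)) ^ 3 * ssum w (n - 1) 1 1 1

/-- The coefficient of `z^n` in `G_c(z)` for the profile `c = (4,0,1)`. -/
noncomputable def g401 (w : K) (n : ℤ) : K :=
  w ^ n * ssum w n 0 1 0 + w * (w ^ (n - 1)) ^ 2 * ssum w (n - 1) 1 1 1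

/-- The coefficient of `z^n` in `G_c(z)` for the profile `c = (3,2,0)`. -/
noncomputable def g320 (w : K) (n : ℤ) : K :=
  w ^ n * ssum w n 0 1 0 + w * (w ^ (n - 1)) ^ 2 * ssum w (n - 1) 0 0 0
    + w ^ 2 * (w ^ (n - 1)) ^ 3 * ssum w (n - 1) 0 1 0
    + w ^ 3 * (w ^ (n - 1)) ^ 4 * ssum w (n - 1) 1 1 1

/-- On coefficients, the passage from `G(z)` to `G(wz)`. -/
def opD (w : K) (g : ℤ → K) (n : ℤ) : K := w ^ n * g n

/-- On coefficients, the passage from `G(z)` to `(1 - z) G(z)`. -/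
def opN (g : ℤ → K) (n : ℤ) : K := g n - g (n - 1)

/-- On coefficients, the passage from `G(z)` to `(1 - zw) G(w^2 z)`. -/
def opD₂ (w : K) (g : ℤ → K) : ℤ → K := opD w (opN (opD w g))

/-- On coefficients, the passage from `G(z)` to `(1 - zw) (1 - zw^2) G(w^3 z)`. -/
def opD₃ (w : K) (g : ℤ → K) : ℤ → K := opD w (opN (opD₂ w g))

lemma cw500 (w : K) : g500 w = opD w (g410 w) := rfl

lemma cw401 {w : K} (hw : Generic w) :
    g401 w = opD w (g311 w) + opD w (g500 w) - opD₂ w (g410 w) := by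
  funext k
  obtain ⟨n, rfl⟩ : ∃ n, k = n + 1 + 1 := ⟨k - 2, by ring⟩
  simp only [Pi.add_apply, Pi.sub_apply, opD₂, opD, opN, g401, g311, g500, g410,
    add_sub_cancel_right, zpow_succ' hw (n + 1), zpow_succ' hw n]
  ring

lemma cw302 {w : K} (hw : Generic w) :
    g302 w = opD w (g221 w) + opD w (g401 w) - opD₂ w (g311 w) := by
  funext k
  obtain ⟨n, rfl⟩ : ∃ n, k = n + 1 + 1 := ⟨k - 2, by ring⟩
  simp only [Pi.add_apply, Pi.sub_apply, opD₂, opD, opN, g401, g311, g302, g221,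
    add_sub_cancel_right, zpow_succ' hw (n + 1), zpow_succ' hw n]
  ring

lemma cw320 {w : K} (hw : Generic w) :
    g320 w = opD w (g302 w) + opD w (g311 w) - opD₂ w (g221 w) := by
  funext k
  obtain ⟨n, rfl⟩ : ∃ n, k = n + 1 + 1 := ⟨k - 2, by ring⟩
  simp only [Pi.add_apply, Pi.sub_apply, opD₂, opD, opN, g320, g311, g302, g221,
    add_sub_cancel_right, zpow_succ' hw (n + 1), zpow_succ' hw n]
  ring

lemma cw410 {w : K} (hw : Generic w) :
    g410 w = opD w (g320 w) + opD w (g401 w) - opD₂ w (g311 w) := by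
  funext k
  obtain ⟨n, rfl⟩ : ∃ n, k = n + 1 + 1 := ⟨k - 2, by ring⟩
  have r := rec410_all hw (n + 1)
  simp only [Pi.add_apply, Pi.sub_apply, opD₂, opD, opN, g320, g311, g401, g410,
    add_sub_cancel_right, zpow_succ' hw (n + 1), zpow_succ' hw n] at *
  linear_combination r

lemma cw311 {w : K} (hw : Generic w) :
    g311 w = opD w (g221 w + g302 w + g410 w) - opD₂ w (g221 w + g320 w + g401 w)
      + opD₃ w (g311 w) := by
  funext k
  obtain ⟨n, rfl⟩ : ∃ n, k = n + 1 + 1 := ⟨k - 2, by ring⟩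
  have r := rec410_all hw (n + 1)
  have r' := rec410_all hw n
  have r'' := rec311_all hw (n + 1)
  simp only [Pi.add_apply, Pi.sub_apply, opD₃, opD₂, opD, opN, g320, g311, g401, g410, g221, g302,
    add_sub_cancel_right, zpow_succ' hw (n + 1), zpow_succ' hw n] at *
  linear_combination r'' - w * (w * w ^ n) * (r - r')

lemma cw221 {w : K} (hw : Generic w) :
    g221 w = opD w (g311 w + g221 w + g320 w) - opD₂ w (g221 w + g302 w + g311 w)
      + opD₃ w (g221 w) := by
  funext k
  obtain ⟨n, rfl⟩ : ∃ n, k = n + 1 + 1 := ⟨k - 2, by ring⟩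
  have r := rec221_all hw n
  simp only [Pi.add_apply, Pi.sub_apply, opD₃, opD₂, opD, opN, g320, g311, g221, g302,
    add_sub_cancel_right, zpow_succ' hw (n + 1), zpow_succ' hw n] at *
  linear_combination r

end Field
end Macmahon

namespace Macmahon

section Field

variable {K : Type*} [Field K]

/-- The q-difference system satisfied by the coefficients of `G_c(z) / (z;w)_∞`. -/
structure CWSystem (w : K) (f221 f311 f410 f500 f302 f401 f320 : ℤ → K) : Prop where
  e500 : ∀ n, f500 n - f500 (n - 1) = w ^ n * f410 n
  e401 : ∀ n, f401 n - f401 (n - 1) = w ^ n * (f311 n + f500 n) - (w ^ n) ^ 2 * f410 n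
  e302 : ∀ n, f302 n - f302 (n - 1) = w ^ n * (f221 n + f401 n) - (w ^ n) ^ 2 * f311 n
  e320 : ∀ n, f320 n - f320 (n - 1) = w ^ n * (f302 n + f311 n) - (w ^ n) ^ 2 * f221 n
  e410 : ∀ n, f410 n - f410 (n - 1) = w ^ n * (f320 n + f401 n) - (w ^ n) ^ 2 * f311 n
  e311 : ∀ n, f311 n - f311 (n - 1) = w ^ n * (f221 n + f302 n + f410 n)
    - (w ^ n) ^ 2 * (f221 n + f320 n + f401 n) + (w ^ n) ^ 3 * f311 n
  e221 : ∀ n, f221 n - f221 (n - 1) = w ^ n * (f311 n + f221 n + f320 n)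
    - (w ^ n) ^ 2 * (f221 n + f302 n + f311 n) + (w ^ n) ^ 3 * f221 n

/-- A solution of the system is determined by its values at `n = 0`: if two solutions agree at
`n - 1`, the equations at `n` express all the differences at `n` through that of the `f221`, whose
own equation then says that its product with `1 - w^n` vanishes. -/
lemma CWSystem.unique {w : K} (hw : Generic w) {f221 f311 f410 f500 f302 f401 f320 : ℤ → K}
    {h221 h311 h410 h500 h302 h401 h320 : ℤ → K}
    (F : CWSystem w f221 f311 f410 f500 f302 f401 f320)
    (H : CWSystem w h221 h311 h410 h500 h302 h401 h320)
    (i221 : f221 0 = h221 0) (i311 : f311 0 = h311 0) (i410 : f410 0 = h410 0)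
    (i500 : f500 0 = h500 0) (i302 : f302 0 = h302 0) (i401 : f401 0 = h401 0)
    (i320 : f320 0 = h320 0) (n : ℕ) :
    f320 n = h320 n := by
  suffices h : f221 n = h221 n ∧ f311 n = h311 n ∧ f410 n = h410 n ∧ f500 n = h500 n ∧
      f302 n = h302 n ∧ f401 n = h401 n ∧ f320 n = h320 n from h.2.2.2.2.2.2
  induction n with
  | zero => exact ⟨i221, i311, i410, i500, i302, i401, i320⟩
  | succ n ih =>
    obtain ⟨j221, j311, j410, j500, j302, j401, j320⟩ := ih
    have hY := hw.ne (n := ((n + 1 : ℕ) : ℤ)) (by omega)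
    have hn : ((n + 1 : ℕ) : ℤ) - 1 = n := by push_cast; ring
    have F1 := F.e500 (n + 1 : ℕ)
    have F2 := F.e401 (n + 1 : ℕ)
    have F3 := F.e302 (n + 1 : ℕ)
    have F4 := F.e320 (n + 1 : ℕ)
    have F5 := F.e410 (n + 1 : ℕ)
    have F6 := F.e311 (n + 1 : ℕ)
    have F7 := F.e221 (n + 1 : ℕ)
    have H1 := H.e500 (n + 1 : ℕ)
    have H2 := H.e401 (n + 1 : ℕ)
    have H3 := H.e302 (n + 1 : ℕ)
    have H4 := H.e320 (n + 1 : ℕ)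
    have H5 := H.e410 (n + 1 : ℕ)
    have H6 := H.e311 (n + 1 : ℕ)
    have H7 := H.e221 (n + 1 : ℕ)
    rw [hn] at F1 F2 F3 F4 F5 F6 F7 H1 H2 H3 H4 H5 H6 H7
    generalize w ^ ((n + 1 : ℕ) : ℤ) = Y at *
    generalize ((n + 1 : ℕ) : ℤ) = m at *
    have d500 : f500 m - h500 m = Y * (f410 m - h410 m) := by linear_combination F1 - H1 + j500
    have d401 : f401 m - h401 m = Y * (f311 m - h311 m) := by
      linear_combination F2 - H2 + j401 + Y * d500
    have d302 : f302 m - h302 m = Y * (f221 m - h221 m) := by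
      linear_combination F3 - H3 + j302 + Y * d401
    have d320 : f320 m - h320 m = Y * (f311 m - h311 m) := by
      linear_combination F4 - H4 + j320 + Y * d302
    have d410 : f410 m - h410 m = Y ^ 2 * (f311 m - h311 m) := by
      linear_combination F5 - H5 + j410 + Y * d320 + Y * d401
    have d311 : f311 m - h311 m = Y * (f221 m - h221 m) := by
      linear_combination F6 - H6 + j311 + Y * d302 + Y * d410 - Y ^ 2 * d320 - Y ^ 2 * d401
    have d221 : (1 - Y) * (f221 m - h221 m) = 0 := by
      linear_combination F7 - H7 + j221 + Y * d311 + Y * d320 - Y ^ 2 * d302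
    have z221 : f221 m - h221 m = 0 := (mul_eq_zero.1 d221).resolve_left hY
    have z311 : f311 m - h311 m = 0 := by rw [d311, z221, mul_zero]
    have z410 : f410 m - h410 m = 0 := by rw [d410, z311, mul_zero]
    refine ⟨sub_eq_zero.1 z221, sub_eq_zero.1 z311, sub_eq_zero.1 z410, sub_eq_zero.1 ?_,
      sub_eq_zero.1 ?_, sub_eq_zero.1 ?_, sub_eq_zero.1 ?_⟩
    · rw [d500, z410, mul_zero]
    · rw [d302, z221, mul_zero]
    · rw [d401, z311, mul_zero]
    · rw [d320, z311, mul_zero]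

/-! ### Division by `(z;w)_∞` -/

/-- On coefficients, the passage from `G(z)` to `G(z) / (z;w)_∞`. -/
noncomputable def conv (w : K) (g : ℤ → K) (n : ℤ) : K := ∑ᶠ m, g m * rpoch w (n - m)

/-- The sequence `g` is supported on the nonnegative integers. -/
def Causal (g : ℤ → K) : Prop := ∀ m < 0, g m = 0

lemma Causal.add {g h : ℤ → K} (hg : Causal g) (hh : Causal h) : Causal (g + h) :=
  fun m hm => by rw [Pi.add_apply, hg m hm, hh m hm, add_zero]

lemma Causal.opD (w : K) {g : ℤ → K} (hg : Causal g) : Causal (opD w g) :=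
  fun m hm => by rw [Macmahon.opD, hg m hm, mul_zero]

lemma Causal.opN {g : ℤ → K} (hg : Causal g) : Causal (opN g) :=
  fun m hm => by rw [Macmahon.opN, hg m hm, hg (m - 1) (by omega), sub_zero]

lemma Causal.finite (w : K) {g : ℤ → K} (hg : Causal g) (n : ℤ) :
    (fun m => g m * rpoch w (n - m)).support.Finite := by
  refine (Set.finite_Icc 0 n).subset fun m hm => ?_
  by_contra hcon
  rw [Set.mem_Icc] at hcon
  refine hm ?_
  rcases (show m < 0 ∨ n - m < 0 by omega) with h | h
  · simp [hg m h]
  · simp [rpoch_neg w h]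

lemma conv_add (w : K) {g h : ℤ → K} (hg : Causal g) (hh : Causal h) (n : ℤ) :
    conv w (g + h) n = conv w g n + conv w h n := by
  rw [conv, conv, conv, ← finsum_add_distrib (hg.finite w n) (hh.finite w n)]
  exact finsum_congr fun m => by rw [Pi.add_apply]; ring

lemma conv_shift (w : K) (g : ℤ → K) (n : ℤ) :
    conv w (fun m => g (m - 1)) n = conv w g (n - 1) := by
  rw [conv, conv, ← finsum_comp_equiv (Equiv.addRight (1 : ℤ))]
  exact finsum_congr fun m => by
    rw [Equiv.coe_addRight, add_sub_cancel_right, show n - (m + 1) = n - 1 - m by ring]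

lemma conv_opN (w : K) {g : ℤ → K} (hg : Causal g) (n : ℤ) :
    conv w (opN g) n = conv w g n - conv w g (n - 1) := by
  have hg' : Causal fun m => g (m - 1) := fun m hm => hg _ (by omega)
  rw [← conv_shift, conv, conv, conv, ← finsum_sub_distrib (hg.finite w n) (hg'.finite w n)]
  exact finsum_congr fun m => by rw [opN]; ring

lemma conv_opD {w : K} (hw : Generic w) {g : ℤ → K} (hg : Causal g) (n : ℤ) :
    conv w (opD w g) n - conv w (opD w g) (n - 1) = w ^ n * conv w g n := by
  rw [conv, conv, conv, mul_finsum,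
    ← finsum_sub_distrib ((hg.opD w).finite w n) ((hg.opD w).finite w (n - 1))]
  refine finsum_congr fun m => ?_
  have h := rpoch_rec hw (n - m)
  rw [show n - 1 - m = n - m - 1 by ring, ← h, opD, zpow_mul₂ hw (show n = n - m + m by ring)]
  ring

lemma conv_opD₂ {w : K} (hw : Generic w) {g : ℤ → K} (hg : Causal g) (n : ℤ) :
    conv w (opD₂ w g) n - conv w (opD₂ w g) (n - 1) = (w ^ n) ^ 2 * conv w g n := by
  rw [opD₂, conv_opD hw (hg.opD w).opN, conv_opN w (hg.opD w), conv_opD hw hg]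
  ring

lemma conv_opD₃ {w : K} (hw : Generic w) {g : ℤ → K} (hg : Causal g) (n : ℤ) :
    conv w (opD₃ w g) n - conv w (opD₃ w g) (n - 1) = (w ^ n) ^ 3 * conv w g n := by
  have hg2 : Causal (opD₂ w g) := ((hg.opD w).opN).opD w
  rw [opD₃, conv_opD hw hg2.opN, conv_opN w hg2, conv_opD₂ hw hg]
  ring

lemma conv_zero (w : K) {g : ℤ → K} (hg : Causal g) : conv w g 0 = g 0 := by
  rw [conv, finsum_eq_single _ 0]
  · simp
  · intro m hm
    rcases lt_or_gt_of_ne hm with h | h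
    · rw [hg m h, zero_mul]
    · rw [rpoch_neg w (by omega), mul_zero]

lemma conv_neg_one (w : K) {g : ℤ → K} (hg : Causal g) : conv w g (-1) = 0 := by
  have : ∀ m, g m * rpoch w (-1 - m) = 0 := fun m => by
    rcases lt_or_ge m 0 with h | h
    · rw [hg m h, zero_mul]
    · rw [rpoch_neg w (by omega), mul_zero]
  simp [conv, this]

lemma causal221 (w : K) : Causal (g221 w) := fun _ hm => ssum_neg w hm _ _ _

lemma causal311 (w : K) : Causal (g311 w) := fun _ hm => ssum_neg w hm _ _ _

lemma causal410 (w : K) : Causal (g410 w) := fun _ hm => ssum_neg w hm _ _ _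

lemma causal500 (w : K) : Causal (g500 w) := fun m hm => by
  simp [g500, ssum_neg w hm]

lemma causal302 (w : K) : Causal (g302 w) := fun m hm => by
  simp [g302, ssum_neg w hm, ssum_neg w (show m - 1 < 0 by omega)]

lemma causal401 (w : K) : Causal (g401 w) := fun m hm => by
  simp [g401, ssum_neg w hm, ssum_neg w (show m - 1 < 0 by omega)]

lemma causal320 (w : K) : Causal (g320 w) := fun m hm => by
  simp [g320, ssum_neg w hm, ssum_neg w (show m - 1 < 0 by omega)]

lemma conv_sub (w : K) {g h : ℤ → K} (hg : Causal g) (hh : Causal h) (n : ℤ) :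
    conv w (g - h) n = conv w g n - conv w h n := by
  rw [conv, conv, conv, ← finsum_sub_distrib (hg.finite w n) (hh.finite w n)]
  exact finsum_congr fun m => by rw [Pi.sub_apply]; ring

lemma Causal.sub {g h : ℤ → K} (hg : Causal g) (hh : Causal h) : Causal (g - h) :=
  fun m hm => by rw [Pi.sub_apply, hg m hm, hh m hm, sub_zero]

/-- An equation with `opD` and `opD₂` after division by `(z;w)_∞`. -/
lemma conv_eq₂ {w : K} (hw : Generic w) {g h₁ h₂ k : ℤ → K} (c₁ : Causal h₁) (c₂ : Causal h₂)
    (ck : Causal k) (h : g = opD w h₁ + opD w h₂ - opD₂ w k) (n : ℤ) :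
    conv w g n - conv w g (n - 1)
      = w ^ n * (conv w h₁ n + conv w h₂ n) - (w ^ n) ^ 2 * conv w k n := by
  have ck2 : Causal (opD₂ w k) := ((ck.opD w).opN).opD w
  simp only [h, conv_sub w ((c₁.opD w).add (c₂.opD w)) ck2, conv_add w (c₁.opD w) (c₂.opD w)]
  linear_combination conv_opD hw c₁ n + conv_opD hw c₂ n - conv_opD₂ hw ck n

/-- An equation with `opD`, `opD₂` and `opD₃` after division by `(z;w)_∞`. -/
lemma conv_eq₃ {w : K} (hw : Generic w) {g h₁ h₂ h₃ k₁ k₂ k₃ l : ℤ → K} (c₁ : Causal h₁)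
    (c₂ : Causal h₂) (c₃ : Causal h₃) (d₁ : Causal k₁) (d₂ : Causal k₂) (d₃ : Causal k₃)
    (cl : Causal l)
    (h : g = opD w (h₁ + h₂ + h₃) - opD₂ w (k₁ + k₂ + k₃) + opD₃ w l) (n : ℤ) :
    conv w g n - conv w g (n - 1)
      = w ^ n * (conv w h₁ n + conv w h₂ n + conv w h₃ n)
        - (w ^ n) ^ 2 * (conv w k₁ n + conv w k₂ n + conv w k₃ n) + (w ^ n) ^ 3 * conv w l n := by
  have c := (c₁.add c₂).add c₃
  have d := (d₁.add d₂).add d₃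
  have d' : Causal (opD₂ w (k₁ + k₂ + k₃)) := ((d.opD w).opN).opD w
  have l' : Causal (opD₃ w l) := ((((cl.opD w).opN).opD w).opN).opD w
  rw [← conv_add w c₁ c₂, ← conv_add w (c₁.add c₂) c₃, ← conv_add w d₁ d₂,
    ← conv_add w (d₁.add d₂) d₃]
  simp only [h, conv_add w ((c.opD w).sub d') l', conv_sub w (c.opD w) d']
  linear_combination conv_opD hw c n - conv_opD₂ hw d n + conv_opD₃ hw cl n

lemma system_conv {w : K} (hw : Generic w) :
    CWSystem w (conv w (g221 w)) (conv w (g311 w)) (conv w (g410 w)) (conv w (g500 w))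
      (conv w (g302 w)) (conv w (g401 w)) (conv w (g320 w)) where
  e500 n := by rw [cw500, conv_opD hw (causal410 w)]
  e401 := conv_eq₂ hw (causal311 w) (causal500 w) (causal410 w) (cw401 hw)
  e302 := conv_eq₂ hw (causal221 w) (causal401 w) (causal311 w) (cw302 hw)
  e320 := conv_eq₂ hw (causal302 w) (causal311 w) (causal221 w) (cw320 hw)
  e410 := conv_eq₂ hw (causal320 w) (causal401 w) (causal311 w) (cw410 hw)
  e311 := conv_eq₃ hw (causal221 w) (causal302 w) (causal410 w) (causal221 w) (causal320 w)
    (causal401 w) (causal311 w) (cw311 hw)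
  e221 := conv_eq₃ hw (causal311 w) (causal221 w) (causal320 w) (causal221 w) (causal302 w)
    (causal311 w) (causal221 w) (cw221 hw)

/-! ### The lattice sum solution -/

/-- The exponent of `w` in the lattice sum. -/
def lexp (r c₁ c₂ : ℤ) (p : ℤ × ℤ) : ℤ :=
  8 * p.1 ^ 2 + 24 * p.1 * p.2 + 24 * p.2 ^ 2 + (8 * r + 5) * p.1 + (16 * r + 5) * p.2 + 7 * r
    - p.1 * (c₁ + c₂) - (p.1 + 3 * p.2 + r) * c₂

/-- The summand of `lat`. -/
noncomputable def lterm (w : K) (r n₀ n₁ n₂ c₁ c₂ : ℤ) (p : ℤ × ℤ) : K :=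
  rpoch w (n₀ - p.1) * rpoch w (n₁ - (p.1 + 3 * p.2 + r)) * rpoch w (n₂ + (2 * p.1 + 3 * p.2 + r))
    * w ^ lexp r c₁ c₂ p

/-- One of the two parts (`r = 0` and `r = 2`) of the lattice sum for the profile
`(5 - c₁ - c₂, c₁, c₂)`: the sum over the vectors `k` with `k₀ + k₁ + k₂ = 0` and
`k₁ - k₀ ≡ r mod 3`, written as `k₀ = a`, `k₁ = a + 3t + r`, of
`w^(...) / ((w;w)_{n₀-k₀} (w;w)_{n₁-k₁} (w;w)_{n₂-k₂})`. -/
noncomputable def lat (w : K) (r n₀ n₁ n₂ c₁ c₂ : ℤ) : K := ∑ᶠ p, lterm w r n₀ n₁ n₂ c₁ c₂ p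

lemma lterm_finite (w : K) (r n₀ n₁ n₂ c₁ c₂ : ℤ) :
    (lterm w r n₀ n₁ n₂ c₁ c₂).support.Finite := by
  obtain ⟨N, hN⟩ : ∃ N : ℤ, |n₀| + |n₁| + |n₂| + |r| = N := ⟨_, rfl⟩
  refine (Set.finite_Icc (-4 * N, -4 * N) (4 * N, 4 * N)).subset fun p hp => ?_
  obtain ⟨a, t⟩ := p
  by_contra hcon
  refine hp ?_
  rcases lt_or_ge (n₀ - a) 0 with h | h
  · simp [lterm, rpoch_neg w h]
  rcases lt_or_ge (n₁ - (a + 3 * t + r)) 0 with h1 | h1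
  · simp [lterm, rpoch_neg w h1]
  rcases lt_or_ge (n₂ + (2 * a + 3 * t + r)) 0 with h2 | h2
  · simp [lterm, rpoch_neg w h2]
  refine absurd ?_ hcon
  have := le_abs_self n₀
  have := le_abs_self n₁
  have := le_abs_self n₂
  have := le_abs_self r
  have := neg_abs_le n₀
  have := neg_abs_le n₁
  have := neg_abs_le n₂
  have := neg_abs_le r
  simp only [Set.mem_Icc, Prod.mk_le_mk]
  omega

/-- A relation between lattice sums from one between their summands. -/
lemma lat_rel (w : K) (σ : ℤ × ℤ ≃ ℤ × ℤ) (a₁ a₂ b : K)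
    {r n₀ n₁ n₂ c₁ c₂ m₀ m₁ m₂ d₁ d₂ s l₀ l₁ l₂ f₁ f₂ : ℤ}
    (h : ∀ p, a₁ * lterm w r n₀ n₁ n₂ c₁ c₂ p + a₂ * lterm w r m₀ m₁ m₂ d₁ d₂ p
      = b * lterm w s l₀ l₁ l₂ f₁ f₂ (σ p)) :
    a₁ * lat w r n₀ n₁ n₂ c₁ c₂ + a₂ * lat w r m₀ m₁ m₂ d₁ d₂
      = b * lat w s l₀ l₁ l₂ f₁ f₂ := by
  have := finsum_rel σ a₁ a₂ 0 0 b 0 (lterm_finite w r n₀ n₁ n₂ c₁ c₂)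
    (lterm_finite w r m₀ m₁ m₂ d₁ d₂) (lterm_finite w r m₀ m₁ m₂ d₁ d₂)
    (lterm_finite w r m₀ m₁ m₂ d₁ d₂) (lterm_finite w s l₀ l₁ l₂ f₁ f₂)
    (lterm_finite w s l₀ l₁ l₂ f₁ f₂) (fun p => by linear_combination h p)
  simp only [lat]
  linear_combination this

/-! The following three relations lower one of the `n_i`; as `k₀ + k₁ + k₂ = 0`, the third one may be
expressed through a shift of `c₂` alone. -/

lemma lat_step₀ {w : K} (hw : Generic w) (r n₀ n₁ n₂ c₁ c₂ : ℤ) :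
    lat w r n₀ n₁ n₂ c₁ c₂ - w ^ n₀ * lat w r n₀ n₁ n₂ (c₁ + 1) c₂
      = lat w r (n₀ - 1) n₁ n₂ c₁ c₂ := by
  have := lat_rel w (Equiv.refl _) 1 (-w ^ n₀) 1 (r := r) (n₀ := n₀) (n₁ := n₁) (n₂ := n₂)
    (c₁ := c₁) (c₂ := c₂) (m₀ := n₀) (m₁ := n₁) (m₂ := n₂) (d₁ := c₁ + 1) (d₂ := c₂)
    (s := r) (l₀ := n₀ - 1) (l₁ := n₁) (l₂ := n₂) (f₁ := c₁) (f₂ := c₂) ?_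
  · linear_combination this
  rintro ⟨a, t⟩
  have h1 := rpoch_rec hw (n₀ - a)
  have h2 : w ^ n₀ * w ^ lexp r (c₁ + 1) c₂ (a, t) = w ^ (n₀ - a) * w ^ lexp r c₁ c₂ (a, t) := by
    simp only [← zpow_add₀ hw.1]; congr 1; simp only [lexp]; ring
  simp only [lterm, Equiv.refl_apply, show n₀ - 1 - a = n₀ - a - 1 by ring, ← h1]
  linear_combination (-rpoch w (n₀ - a) * rpoch w (n₁ - (a + 3 * t + r))
    * rpoch w (n₂ + (2 * a + 3 * t + r))) * h2

lemma lat_step₁ {w : K} (hw : Generic w) (r n₀ n₁ n₂ c₁ c₂ : ℤ) :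
    lat w r n₀ n₁ n₂ c₁ c₂ - w ^ n₁ * lat w r n₀ n₁ n₂ (c₁ - 1) (c₂ + 1)
      = lat w r n₀ (n₁ - 1) n₂ c₁ c₂ := by
  have := lat_rel w (Equiv.refl _) 1 (-w ^ n₁) 1 (r := r) (n₀ := n₀) (n₁ := n₁) (n₂ := n₂)
    (c₁ := c₁) (c₂ := c₂) (m₀ := n₀) (m₁ := n₁) (m₂ := n₂) (d₁ := c₁ - 1) (d₂ := c₂ + 1)
    (s := r) (l₀ := n₀) (l₁ := n₁ - 1) (l₂ := n₂) (f₁ := c₁) (f₂ := c₂) ?_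
  · linear_combination this
  rintro ⟨a, t⟩
  have h1 := rpoch_rec hw (n₁ - (a + 3 * t + r))
  have h2 : w ^ n₁ * w ^ lexp r (c₁ - 1) (c₂ + 1) (a, t)
      = w ^ (n₁ - (a + 3 * t + r)) * w ^ lexp r c₁ c₂ (a, t) := by
    simp only [← zpow_add₀ hw.1]; congr 1; simp only [lexp]; ring
  simp only [lterm, Equiv.refl_apply,
    show n₁ - 1 - (a + 3 * t + r) = n₁ - (a + 3 * t + r) - 1 by ring, ← h1]
  linear_combination (-rpoch w (n₀ - a) * rpoch w (n₁ - (a + 3 * t + r))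
    * rpoch w (n₂ + (2 * a + 3 * t + r))) * h2

lemma lat_step₂ {w : K} (hw : Generic w) (r n₀ n₁ n₂ c₁ c₂ : ℤ) :
    lat w r n₀ n₁ n₂ c₁ c₂ - w ^ n₂ * lat w r n₀ n₁ n₂ c₁ (c₂ - 1)
      = lat w r n₀ n₁ (n₂ - 1) c₁ c₂ := by
  have := lat_rel w (Equiv.refl _) 1 (-w ^ n₂) 1 (r := r) (n₀ := n₀) (n₁ := n₁) (n₂ := n₂)
    (c₁ := c₁) (c₂ := c₂) (m₀ := n₀) (m₁ := n₁) (m₂ := n₂) (d₁ := c₁) (d₂ := c₂ - 1)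
    (s := r) (l₀ := n₀) (l₁ := n₁) (l₂ := n₂ - 1) (f₁ := c₁) (f₂ := c₂) ?_
  · linear_combination this
  rintro ⟨a, t⟩
  have h1 := rpoch_rec hw (n₂ + (2 * a + 3 * t + r))
  have h2 : w ^ n₂ * w ^ lexp r c₁ (c₂ - 1) (a, t)
      = w ^ (n₂ + (2 * a + 3 * t + r)) * w ^ lexp r c₁ c₂ (a, t) := by
    simp only [← zpow_add₀ hw.1]; congr 1; simp only [lexp]; ring
  simp only [lterm, Equiv.refl_apply,
    show n₂ - 1 + (2 * a + 3 * t + r) = n₂ + (2 * a + 3 * t + r) - 1 by ring, ← h1]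
  linear_combination (-rpoch w (n₀ - a) * rpoch w (n₁ - (a + 3 * t + r))
    * rpoch w (n₂ + (2 * a + 3 * t + r))) * h2

/-- The index change induced by the cyclic rotation of the lattice vector. -/
def rotEquiv (r : ℤ) : ℤ × ℤ ≃ ℤ × ℤ where
  toFun p := (p.1 + 3 * p.2 + r, -p.1 - 2 * p.2 - r)
  invFun p := (-2 * p.1 - 3 * p.2 - r, p.1 + p.2)
  left_inv p := by ext <;> simp <;> ring
  right_inv p := by ext <;> simp <;> ring

lemma lat_rot (w : K) (r n c₁ c₂ : ℤ) :
    lat w r n n n c₁ c₂ = lat w r n n n c₂ (5 - c₁ - c₂) := by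
  have := lat_rel w (rotEquiv r) 1 0 1 (r := r) (n₀ := n) (n₁ := n) (n₂ := n)
    (c₁ := c₁) (c₂ := c₂) (m₀ := n) (m₁ := n) (m₂ := n) (d₁ := c₁) (d₂ := c₂)
    (s := r) (l₀ := n) (l₁ := n) (l₂ := n) (f₁ := c₂) (f₂ := 5 - c₁ - c₂) ?_
  · linear_combination this
  rintro ⟨a, t⟩
  have h1 : lexp r c₂ (5 - c₁ - c₂) (rotEquiv r (a, t)) = lexp r c₁ c₂ (a, t) := by
    simp only [lexp, rotEquiv, Equiv.coe_fn_mk]; ring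
  have h2 : n - (a + 3 * t + r + 3 * (-a - 2 * t - r) + r) = n + (2 * a + 3 * t + r) := by ring
  have h3 : n + (2 * (a + 3 * t + r) + 3 * (-a - 2 * t - r) + r) = n - a := by ring
  simp only [lterm, h1]
  simp only [rotEquiv, Equiv.coe_fn_mk, h2, h3]
  ring

/-- The index change induced by the reflection `(k₀, k₁, k₂) ↦ (k₁ - 1, k₀ + 1, k₂)`. -/
def wallEquiv : ℤ × ℤ ≃ ℤ × ℤ where
  toFun p := (p.1 + 3 * p.2 - 1, -p.2)
  invFun p := (p.1 + 3 * p.2 + 1, -p.2)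
  left_inv p := by ext <;> simp <;> ring
  right_inv p := by ext <;> simp <;> ring

/-- On the wall `c₁ = -1` the reflection exchanges the two parts of the lattice sum. -/
lemma lat_wall (w : K) (n c₂ : ℤ) :
    lat w 0 (n - 1) n n (-1) c₂ = lat w 2 (n - 1) n n (-1) c₂ := by
  have := lat_rel w wallEquiv 1 0 1 (r := 0) (n₀ := n - 1) (n₁ := n) (n₂ := n)
    (c₁ := -1) (c₂ := c₂) (m₀ := n) (m₁ := n) (m₂ := n) (d₁ := -1) (d₂ := c₂)
    (s := 2) (l₀ := n - 1) (l₁ := n) (l₂ := n) (f₁ := -1) (f₂ := c₂) ?_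
  · linear_combination this
  rintro ⟨a, t⟩
  have h1 : lexp 2 (-1) c₂ (wallEquiv (a, t)) = lexp 0 (-1) c₂ (a, t) := by
    simp only [lexp, wallEquiv, Equiv.coe_fn_mk]; ring
  have h2 : n - 1 - (a + 3 * t - 1) = n - (a + 3 * t + 0) := by ring
  have h3 : n - (a + 3 * t - 1 + 3 * -t + 2) = n - 1 - a := by ring
  have h4 : n + (2 * (a + 3 * t - 1) + 3 * -t + 2) = n + (2 * a + 3 * t + 0) := by ring
  simp only [lterm, h1]
  simp only [wallEquiv, Equiv.coe_fn_mk, h2, h3, h4]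
  ring

/-- The lattice sum solving the Corteel-Welsh system, for the profile `(5 - c₁ - c₂, c₁, c₂)`. -/
noncomputable def latL (w : K) (c₁ c₂ n : ℤ) : K := lat w 0 n n n c₁ c₂ - lat w 2 n n n c₁ c₂

/-- The equation of the Corteel-Welsh system for a profile all of whose parts are positive holds for
all integers `c₁`, `c₂`; it is the expansion of the passage from `(n, n, n)` to
`(n - 1, n - 1, n - 1)` one coordinate at a time. -/
lemma latL_rec {w : K} (hw : Generic w) (c₁ c₂ n : ℤ) :
    latL w c₁ c₂ n - latL w c₁ c₂ (n - 1)
      = w ^ n * (latL w (c₁ + 1) c₂ n + latL w (c₁ - 1) (c₂ + 1) n + latL w c₁ (c₂ - 1) n)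
        - (w ^ n) ^ 2 * (latL w c₁ (c₂ + 1) n + latL w (c₁ + 1) (c₂ - 1) n
          + latL w (c₁ - 1) c₂ n)
        + (w ^ n) ^ 3 * latL w c₁ c₂ n := by
  have key : ∀ r, lat w r n n n c₁ c₂ - lat w r (n - 1) (n - 1) (n - 1) c₁ c₂
      = w ^ n * (lat w r n n n (c₁ + 1) c₂ + lat w r n n n (c₁ - 1) (c₂ + 1)
          + lat w r n n n c₁ (c₂ - 1))
        - (w ^ n) ^ 2 * (lat w r n n n c₁ (c₂ + 1) + lat w r n n n (c₁ + 1) (c₂ - 1)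
          + lat w r n n n (c₁ - 1) c₂)
        + (w ^ n) ^ 3 * lat w r n n n c₁ c₂ := by
    intro r
    have s0 := lat_step₀ hw r n n n c₁ c₂
    have s0b := lat_step₀ hw r n n n (c₁ - 1) (c₂ + 1)
    have s0c := lat_step₀ hw r n n n c₁ (c₂ - 1)
    have s0d := lat_step₀ hw r n n n (c₁ - 1) c₂
    have s1 := lat_step₁ hw r (n - 1) n n c₁ c₂
    have s1b := lat_step₁ hw r (n - 1) n n c₁ (c₂ - 1)
    have s2 := lat_step₂ hw r (n - 1) (n - 1) n c₁ c₂
    simp only [sub_add_cancel] at *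
    linear_combination s0 - w ^ n * s0b - w ^ n * s0c + (w ^ n) ^ 2 * s0d + s1 - w ^ n * s1b + s2
  simp only [latL]
  linear_combination key 0 - key 2

lemma latL_rot (w : K) (c₁ c₂ n : ℤ) : latL w c₁ c₂ n = latL w c₂ (5 - c₁ - c₂) n := by
  simp only [latL, lat_rot w _ n c₁ c₂]

/-- Together with `latL_wall'`, this turns the general equation for a profile with a zero part into
the shorter one of the Corteel-Welsh system. -/
lemma latL_wall {w : K} (hw : Generic w) (c₂ n : ℤ) :
    latL w (-1) c₂ n = w ^ n * latL w 0 c₂ n := by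
  have h0 := lat_step₀ hw 0 n n n (-1) c₂
  have h2 := lat_step₀ hw 2 n n n (-1) c₂
  have h := lat_wall w n c₂
  rw [show (-1 : ℤ) + 1 = 0 by norm_num] at h0 h2
  simp only [latL]
  linear_combination h0 - h2 + h

lemma latL_wall' {w : K} (hw : Generic w) (c₁ n : ℤ) :
    latL w c₁ (-1) n = w ^ n * latL w (c₁ - 1) 0 n := by
  rw [latL_rot w c₁, latL_wall hw, latL_rot w 0, latL_rot w (5 - c₁ - -1)]
  ring_nf

lemma lterm_eq_zero (w : K) {r n₀ n₁ n₂ a t : ℤ} (c₁ c₂ : ℤ)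
    (h : n₀ < a ∨ n₁ < a + 3 * t + r ∨ n₂ + (2 * a + 3 * t + r) < 0) :
    lterm w r n₀ n₁ n₂ c₁ c₂ (a, t) = 0 := by
  rcases h with h | h | h
  · simp [lterm, rpoch_neg w (show n₀ - a < 0 by omega)]
  · simp [lterm, rpoch_neg w (show n₁ - (a + 3 * t + r) < 0 by omega)]
  · simp [lterm, rpoch_neg w h]

lemma latL_zero (w : K) (c₁ c₂ : ℤ) : latL w c₁ c₂ 0 = 1 := by
  have h2 : lat w 2 0 0 0 c₁ c₂ = 0 := by
    rw [lat]
    have : ∀ p, lterm w 2 0 0 0 c₁ c₂ p = 0 := fun ⟨a, t⟩ => lterm_eq_zero w _ _ (by omega)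
    simp [this]
  have h0 : lat w 0 0 0 0 c₁ c₂ = 1 := by
    rw [lat, finsum_eq_single _ 0]
    · simp [lterm, lexp]
    · rintro ⟨a, t⟩ hp
      refine lterm_eq_zero w _ _ ?_
      by_contra hcon
      exact hp (by ext <;> simp <;> omega)
  rw [latL, h0, h2, sub_zero]

lemma system_lat {w : K} (hw : Generic w) :
    CWSystem w (latL w 2 1) (latL w 1 1) (latL w 1 0) (latL w 0 0) (latL w 0 2) (latL w 0 1)
      (latL w 2 0) := by
  have r12 : ∀ n, latL w 1 2 n = latL w 2 1 n := fun n => by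
    rw [latL_rot, latL_rot]; norm_num
  have r22 : ∀ n, latL w 2 2 n = latL w 2 1 n := fun n => by rw [latL_rot]; norm_num
  have r30 : ∀ n, latL w 3 0 n = latL w 0 2 n := fun n => by rw [latL_rot]; norm_num
  have r31 : ∀ n, latL w 3 1 n = latL w 1 1 n := fun n => by rw [latL_rot]; norm_num
  have w1 : ∀ c n, latL w (-1) c n = w ^ n * latL w 0 c n := latL_wall hw
  have w2 := latL_wall' hw
  constructor
  · intro n
    have h := latL_rec hw 0 0 n
    norm_num [w1, w2, r12, r22, r30, r31] at h
    linear_combination h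
  · intro n
    have h := latL_rec hw 0 1 n
    norm_num [w1, w2, r12, r22, r30, r31] at h
    linear_combination h
  · intro n
    have h := latL_rec hw 0 2 n
    norm_num [w1, w2, r12, r22, r30, r31] at h
    linear_combination h
  · intro n
    have h := latL_rec hw 2 0 n
    norm_num [w1, w2, r12, r22, r30, r31] at h
    linear_combination h
  · intro n
    have h := latL_rec hw 1 0 n
    norm_num [w1, w2, r12, r22, r30, r31] at h
    linear_combination h
  · intro n
    have h := latL_rec hw 1 1 n
    norm_num [w1, w2, r12, r22, r30, r31] at h
    linear_combination h
  · intro n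
    have h := latL_rec hw 2 1 n
    norm_num [w1, w2, r12, r22, r30, r31] at h
    linear_combination h

/-- The quadruple sums, divided by `(z;w)_∞`, have the lattice sums as coefficients. -/
lemma conv_g320 {w : K} (hw : Generic w) (n : ℕ) : conv w (g320 w) n = latL w 2 0 n := by
  have hm : (-1 : ℤ) < 0 := by norm_num
  refine (system_conv hw).unique hw (system_lat hw) ?_ ?_ ?_ ?_ ?_ ?_ ?_ n <;>
  rw [latL_zero]
  · rw [conv_zero w (causal221 w)]; simp [g221, ssum_zero]
  · rw [conv_zero w (causal311 w)]; simp [g311, ssum_zero]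
  · rw [conv_zero w (causal410 w)]; simp [g410, ssum_zero]
  · rw [conv_zero w (causal500 w)]; simp [g500, ssum_zero]
  · rw [conv_zero w (causal302 w)]; simp [g302, ssum_zero, ssum_neg w hm]
  · rw [conv_zero w (causal401 w)]; simp [g401, ssum_zero, ssum_neg w hm]
  · rw [conv_zero w (causal320 w)]; simp [g320, ssum_zero, ssum_neg w hm]

end Field

end Macmahon

/-! ### Convergence of sums and products of formal power series -/

namespace Macmahon

open Filter Topology PowerSeries

instance : T2Space ℚ⟦X⟧ := PowerSeries.WithPiTopology.instT2Space ℚ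

instance : IsTopologicalRing ℚ⟦X⟧ := PowerSeries.WithPiTopology.instIsTopologicalRing ℚ

lemma tendsto_iff {ι : Type*} {f : ι → ℚ⟦X⟧} {u : Filter ι} {g : ℚ⟦X⟧} :
    Tendsto f u (𝓝 g) ↔ ∀ d, Tendsto (fun i => coeff d (f i)) u (𝓝 (coeff d g)) :=
  PowerSeries.WithPiTopology.tendsto_iff_coeff_tendsto ℚ f u g

lemma hasSum_iff {ι : Type*} {f : ι → ℚ⟦X⟧} {g : ℚ⟦X⟧} :
    HasSum f g ↔ ∀ d, HasSum (fun i => coeff d (f i)) (coeff d g) :=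
  PowerSeries.WithPiTopology.hasSum_iff_hasSum_coeff ℚ

/-- For every `d`, all but finitely many members of the family are divisible by `X ^ d`. -/
def Small {ι : Type*} (T : ι → ℚ⟦X⟧) : Prop := ∀ d : ℕ, {k | ¬ X ^ d ∣ T k}.Finite

lemma Small.mul {ι : Type*} {T : ι → ℚ⟦X⟧} (hT : Small T) (C : ι → ℚ⟦X⟧) :
    Small fun k => T k * C k :=
  fun d => (hT d).subset fun _ hk h => hk (h.mul_right _)

lemma Small.coeff_eq {ι : Type*} {T : ι → ℚ⟦X⟧} (hT : Small T) {d : ℕ} {k : ι}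
    (hk : k ∉ (hT (d + 1)).toFinset) : coeff d (T k) = 0 := by
  simp only [Set.Finite.mem_toFinset, Set.mem_ofPred_eq, not_not] at hk
  exact X_pow_dvd_iff.1 hk d (by omega)

lemma Small.summable {ι : Type*} {T : ι → ℚ⟦X⟧} (hT : Small T) : Summable T := by
  refine ⟨PowerSeries.mk fun d => ∑ k ∈ (hT (d + 1)).toFinset, coeff d (T k), hasSum_iff.2 ?_⟩
  intro d
  rw [coeff_mk]
  exact hasSum_sum_of_ne_finset_zero fun k hk => hT.coeff_eq hk

lemma Small.coeff_tsum {ι : Type*} {T : ι → ℚ⟦X⟧} (hT : Small T) {d : ℕ} {s : Finset ι}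
    (hs : ∀ k ∉ s, coeff d (T k) = 0) : coeff d (∑' k, T k) = ∑ k ∈ s, coeff d (T k) :=
  (hasSum_iff.1 hT.summable.hasSum d).unique (hasSum_sum_of_ne_finset_zero hs)

/-- Passage to the limit under the sum. -/
lemma Small.tendsto {ι : Type*} {T : ι → ℚ⟦X⟧} (hT : Small T) {c : ℕ → ι → ℚ⟦X⟧} {C : ι → ℚ⟦X⟧}
    (h : ∀ k, Tendsto (fun n => c n k) atTop (𝓝 (C k))) :
    Tendsto (fun n => ∑' k, T k * c n k) atTop (𝓝 (∑' k, T k * C k)) := by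
  refine tendsto_iff.2 fun d => ?_
  have key : ∀ D : ι → ℚ⟦X⟧, coeff d (∑' k, T k * D k)
      = ∑ k ∈ (hT (d + 1)).toFinset, coeff d (T k * D k) := by
    intro D
    refine (hT.mul D).coeff_tsum fun k hk => ?_
    simp only [Set.Finite.mem_toFinset, Set.mem_ofPred_eq, not_not] at hk
    exact X_pow_dvd_iff.1 (hk.mul_right _) d (by omega)
  simp only [key]
  exact tendsto_finsetSum _ fun k _ => tendsto_iff.1 ((h k).const_mul (T k)) d

lemma small_of_exponent {ι : Type*} {T : ι → ℚ⟦X⟧} (v : ι → ℕ) (hv : ∀ k, X ^ v k ∣ T k)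
    (hfin : ∀ d, {k | v k < d}.Finite) : Small T := fun d =>
  (hfin d).subset fun k hk => by
    by_contra hcon
    exact hk ((pow_dvd_pow _ (by simpa using hcon)).trans (hv k))

/-- Inversion is continuous along series with constant coefficient `1`. -/
lemma tendsto_inv {f : ℕ → ℚ⟦X⟧} {g : ℚ⟦X⟧} (h : Tendsto f atTop (𝓝 g))
    (hf : ∀ n, constantCoeff (f n) = 1) (hg : constantCoeff g = 1) :
    Tendsto (fun n => (f n)⁻¹) atTop (𝓝 g⁻¹) := by
  refine tendsto_iff.2 fun d => ?_
  induction d using Nat.strong_induction_on with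
  | _ d ih =>
    rw [coeff_inv]
    simp_rw [fun n => coeff_inv d (f n), hf, hg]
    split_ifs
    · exact tendsto_const_nhds
    · refine Tendsto.const_mul _ (tendsto_finsetSum _ fun p _ => ?_)
      split_ifs with hp
      · exact (tendsto_iff.1 h _).mul (ih _ hp)
      · exact tendsto_const_nhds

/-- The infinite product `(q^r; q^N)_∞`. -/
noncomputable def B (N r : ℕ) : ℚ⟦X⟧ := ∏' k : ℕ, (1 - X ^ (N * k + r))

lemma multipliable_B {N r : ℕ} (hN : 0 < N) :
    Multipliable fun k : ℕ => (1 - X ^ (N * k + r) : ℚ⟦X⟧) := by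
  simp_rw [sub_eq_add_neg]
  refine PowerSeries.WithPiTopology.multipliable_one_add_of_tendsto_order_atTop_nhds_top ℚ ?_
  refine ENat.tendsto_nhds_top_iff_natCast_lt.mpr fun n => Filter.eventually_atTop.mpr ⟨n + 1, ?_⟩
  intro m hm
  rw [order_neg, order_X_pow]
  have : m ≤ N * m := Nat.le_mul_of_pos_left _ hN
  exact_mod_cast (by omega : n < N * m + r)

lemma tendsto_B {N r : ℕ} (hN : 0 < N) :
    Tendsto (fun n => ∏ k ∈ Finset.range n, (1 - X ^ (N * k + r) : ℚ⟦X⟧)) atTop (𝓝 (B N r)) :=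
  (multipliable_B hN).hasProd.tendsto_prod_nat

lemma constantCoeff_prod_B {N r : ℕ} (hr : 0 < r) (n : ℕ) :
    constantCoeff (∏ k ∈ Finset.range n, (1 - X ^ (N * k + r) : ℚ⟦X⟧)) = 1 := by
  rw [map_prod]
  refine Finset.prod_eq_one fun k _ => ?_
  rw [map_sub, map_one, map_pow, constantCoeff_X, zero_pow (by omega), sub_zero]

lemma constantCoeff_B {N r : ℕ} (hN : 0 < N) (hr : 0 < r) : constantCoeff (B N r) = 1 := by
  have h := tendsto_iff.1 (tendsto_B (r := r) hN) 0
  simp only [coeff_zero_eq_constantCoeff, constantCoeff_prod_B hr] at h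
  exact (tendsto_nhds_unique h tendsto_const_nhds)

lemma B_ne_zero {N r : ℕ} (hN : 0 < N) (hr : 0 < r) : B N r ≠ 0 := fun h => by
  simpa [h] using constantCoeff_B hN hr

/-- Splitting a product according to the residue of the index modulo `c`. -/
lemma B_split {N r c : ℕ} (hN : 0 < N) (hc : 0 < c) :
    B N r = ∏ i ∈ Finset.range c, B (c * N) (N * i + r) := by
  have h1 : Tendsto (fun n => ∏ k ∈ Finset.range (c * n), (1 - X ^ (N * k + r) : ℚ⟦X⟧)) atTop
      (𝓝 (B N r)) := (tendsto_B hN).comp (tendsto_id.const_mul_atTop' hc)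
  have h2 : Tendsto (fun n => ∏ i ∈ Finset.range c, ∏ k ∈ Finset.range n,
      (1 - X ^ (c * N * k + (N * i + r)) : ℚ⟦X⟧)) atTop
      (𝓝 (∏ i ∈ Finset.range c, B (c * N) (N * i + r))) :=
    tendsto_finsetProd _ fun i _ => tendsto_B (Nat.mul_pos hc hN)
  refine tendsto_nhds_unique h1 (h2.congr fun n => ?_)
  induction n with
  | zero => simp
  | succ n ih =>
    rw [Nat.mul_succ, Finset.prod_range_add, ← ih, ← Finset.prod_mul_distrib]
    refine Finset.prod_congr rfl fun i _ => ?_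
    rw [Finset.prod_range_succ, show c * N * n + (N * i + r) = N * (c * n + i) + r by ring]

end Macmahon

/-! ### Transfer of the finite identity to formal power series -/

namespace Macmahon

open Filter Topology PowerSeries

/-- The field of fractions of the ring of formal power series. -/
abbrev KK : Type := FractionRing ℚ⟦X⟧

/-- The embedding of formal power series into their field of fractions. -/
noncomputable abbrev φ : ℚ⟦X⟧ →+* KK := algebraMap _ _

lemma φ_inj : Function.Injective φ := IsFractionRing.injective ℚ⟦X⟧ KK

/-- The variable as an element of the field of fractions. -/
noncomputable def ww : KK := φ X

lemma generic_pow {N : ℕ} (hN : 0 < N) : Generic (ww ^ N) := by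
  refine ⟨pow_ne_zero _ fun h => X_ne_zero (φ_inj (h.trans (map_zero φ).symm)), fun k h => ?_⟩
  rw [← pow_mul, ww, ← map_pow, ← map_one φ] at h
  have := congrArg constantCoeff (φ_inj h)
  rw [map_pow, constantCoeff_X, map_one, zero_pow (by positivity)] at this
  exact zero_ne_one this

lemma generic_ww : Generic ww := by simpa using generic_pow one_pos

/-- The q-factorial `(X^N; X^N)_n`, extended by `1` to negative `n`. -/
noncomputable def P (N : ℕ) (n : ℤ) : ℚ⟦X⟧ := ∏ k ∈ Finset.range n.toNat, (1 - X ^ (N * k + N))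

/-- The reciprocal q-factorial `1 / (X^N; X^N)_n`, extended by `0` to negative `n`. -/
noncomputable def E (N : ℕ) (n : ℤ) : ℚ⟦X⟧ := if 0 ≤ n then (P N n)⁻¹ else 0

lemma φ_P (N : ℕ) (n : ℤ) : φ (P N n) = poch (ww ^ N) n := by
  simp only [P, poch, map_prod, map_sub, map_one, map_pow, ww]
  exact Finset.prod_congr rfl fun k _ => by rw [← pow_mul, mul_add, mul_one]

lemma φ_inv {f : ℚ⟦X⟧} (hf : constantCoeff f ≠ 0) : φ f⁻¹ = (φ f)⁻¹ := by
  refine eq_inv_of_mul_eq_one_left ?_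
  rw [← map_mul, PowerSeries.inv_mul_cancel _ hf, map_one]

lemma constantCoeff_P {N : ℕ} (hN : 0 < N) (n : ℤ) : constantCoeff (P N n) = 1 :=
  constantCoeff_prod_B hN _

lemma φ_E {N : ℕ} (hN : 0 < N) (n : ℤ) : φ (E N n) = rpoch (ww ^ N) n := by
  rw [E, rpoch]
  split_ifs
  · rw [φ_inv (by simp [constantCoeff_P hN]), φ_P]
  · exact map_zero φ

lemma tendsto_E {N : ℕ} (hN : 0 < N) {u : ℕ → ℤ} (hu : Tendsto u atTop atTop) :
    Tendsto (fun n => E N (u n)) atTop (𝓝 (B N N)⁻¹) := by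
  have hu' : Tendsto (fun n => (u n).toNat) atTop atTop :=
    tendsto_atTop.2 fun b => (hu.eventually_ge_atTop b).mono fun n hn => by omega
  have h := (tendsto_inv (tendsto_B (r := N) hN) (constantCoeff_prod_B hN)
    (constantCoeff_B hN hN)).comp hu'
  refine h.congr' ?_
  filter_upwards [hu.eventually_ge_atTop 0] with n hn
  simp [E, P, hn]

lemma φ_E_one (n : ℤ) : φ (E 1 n) = rpoch ww n := by simpa using φ_E one_pos n

lemma qPoch_eq (n : ℕ) : qPoch n = P 1 n := by
  simp [qPoch, P, q]

lemma φ_qPoch (n : ℕ) : φ (qPoch n) = poch ww n := by simp [qPoch_eq, φ_P]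

lemma φ_qPoch_inv (n : ℕ) : φ (qPoch n)⁻¹ = (poch ww n)⁻¹ := by
  rw [φ_inv (by simp [qPoch_eq, constantCoeff_P]), φ_qPoch]

lemma φ_qBinom (m k : ℕ) :
    φ (qBinom m k) = poch ww m * rpoch ww k * rpoch ww (m - k) := by
  rw [qBinom]
  split_ifs with h
  · rw [map_mul, φ_inv (by simp [qPoch_eq, constantCoeff_P]), map_mul, φ_qPoch, φ_qPoch, φ_qPoch,
      rpoch, rpoch, if_pos (by omega), if_pos (by omega), Nat.cast_sub h]
    ring
  · rw [map_zero, rpoch_neg ww (show (m : ℤ) - k < 0 by omega), mul_zero]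

/-- The summands of the quadruple sums. -/
noncomputable def T (α β b c d : ℕ) (k : ℕ × ℕ × ℕ × ℕ) : ℚ⟦X⟧ :=
  X ^ (k.1 ^ 2 + k.2.1 ^ 2 + k.2.2.1 ^ 2 + k.2.2.2 ^ 2 + k.2.1 * k.2.2.2 - k.1 * k.2.1
      + (α * k.1 + β + b * k.2.1 + c * k.2.2.1 + d * k.2.2.2))
    * (qPoch k.1)⁻¹ * qBinom k.1 k.2.1 * qBinom k.1 k.2.2.2 * qBinom k.2.1 k.2.2.1

lemma φ_T (α β b c d n₁ n₂ n₃ n₄ : ℕ) :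
    φ (T α β b c d (n₁, n₂, n₃, n₄)) = ww ^ β * (ww ^ (n₁ : ℤ)) ^ α
      * (poch ww n₁ * sterm ww n₁ b c d (n₂, n₃, n₄)) := by
  have hle : n₁ * n₂ ≤ n₁ ^ 2 + n₂ ^ 2 + n₃ ^ 2 + n₄ ^ 2 + n₂ * n₄ := by
    nlinarith [Nat.zero_le (n₂ * n₄), Nat.zero_le (n₁ * n₂), sq_nonneg ((n₁ : ℤ) - n₂)]
  have he : ww ^ (n₁ ^ 2 + n₂ ^ 2 + n₃ ^ 2 + n₄ ^ 2 + n₂ * n₄ - n₁ * n₂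
      + (α * n₁ + β + b * n₂ + c * n₃ + d * n₄))
      = ww ^ β * (ww ^ (n₁ : ℤ)) ^ α * ww ^ sexp n₁ b c d (n₂, n₃, n₄) := by
    rw [← zpow_natCast, ← zpow_natCast ww β, ← zpow_natCast _ α, ← zpow_mul,
      ← zpow_add₀ generic_ww.1, ← zpow_add₀ generic_ww.1]
    congr 1
    rw [Nat.cast_add, Nat.cast_sub hle]
    push_cast [sexp]
    ring
  have h1 : (poch ww n₁)⁻¹ * poch ww n₁ = 1 := inv_mul_cancel₀ (poch_ne generic_ww _)
  have h2 : poch ww n₂ * rpoch ww n₂ = 1 := by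
    rw [rpoch, if_pos (by omega), mul_inv_cancel₀ (poch_ne generic_ww _)]
  simp only [T, map_mul, map_pow, φ_qBinom, φ_qPoch_inv, sterm, scoef]
  rw [show φ X = ww from rfl, he]
  linear_combination (ww ^ β * (ww ^ (n₁ : ℤ)) ^ α * ww ^ sexp n₁ b c d (n₂, n₃, n₄)
    * (rpoch ww n₂ * rpoch ww (n₁ - n₂) * poch ww n₁ * rpoch ww n₄ * rpoch ww (n₁ - n₄)
    * poch ww n₂ * rpoch ww n₃ * rpoch ww (n₂ - n₃))) * h1
    + (ww ^ β * (ww ^ (n₁ : ℤ)) ^ α * ww ^ sexp n₁ b c d (n₂, n₃, n₄)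
    * (rpoch ww (n₁ - n₂) * poch ww n₁ * rpoch ww n₄ * rpoch ww (n₁ - n₄)
    * rpoch ww n₃ * rpoch ww (n₂ - n₃))) * h2

lemma small_T (α β b c d : ℕ) : Small (T α β b c d) := by
  refine small_of_exponent _ (fun k => ((dvd_mul_right _ _).mul_right _ |>.mul_right _).mul_right _)
    fun e => (Set.finite_Iic (2 * e, 2 * e, 2 * e, 2 * e)).subset ?_
  rintro ⟨n₁, n₂, n₃, n₄⟩ hk
  simp only [Set.mem_ofPred_eq] at hk
  have h0 := lt_of_le_of_lt (Nat.le_add_right _ _) hk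
  have h1 : n₁ ^ 2 + n₂ ^ 2 + n₃ ^ 2 + n₄ ^ 2 + n₂ * n₄ < e + n₁ * n₂ := by omega
  have h2 : 0 ≤ n₂ * n₄ := Nat.zero_le _
  simp only [Set.mem_Iic, Prod.mk_le_mk]
  zify at h1 h2 ⊢
  refine ⟨?_, ?_, ?_, ?_⟩ <;>
  nlinarith [sq_nonneg ((n₁ : ℤ) - 2 * n₂), sq_nonneg ((n₂ : ℤ) - 2 * n₁),
    sq_nonneg ((n₁ : ℤ) - 1), sq_nonneg ((n₂ : ℤ) - 1), sq_nonneg ((n₃ : ℤ) - 1),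
    sq_nonneg ((n₄ : ℤ) - 1), sq_nonneg ((n₁ : ℤ) - n₂)]

lemma finsum_eq_sum_of_injective {α β M : Type*} [AddCommMonoid M] (e : β ↪ α) (s : Finset β)
    {f : α → M} (h : ∀ a, f a ≠ 0 → ∃ b ∈ s, e b = a) : ∑ᶠ a, f a = ∑ b ∈ s, f (e b) := by
  rw [← Finset.sum_map s e f]
  refine finsum_eq_sum_of_support_subset _ fun a ha => ?_
  simpa using h a ha

lemma sterm_eq_zero {K : Type*} [Field K] (w : K) {n m₂ m₃ m₄ : ℤ} (b c d : ℤ)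
    (h : n < m₂ ∨ n < m₄ ∨ m₄ < 0 ∨ m₃ < 0 ∨ m₂ < m₃) : sterm w n b c d (m₂, m₃, m₄) = 0 := by
  have : n - m₂ < 0 ∨ n - m₄ < 0 ∨ m₄ < 0 ∨ m₃ < 0 ∨ m₂ - m₃ < 0 := by omega
  rcases this with h | h | h | h | h <;> simp [sterm, scoef, rpoch_neg w h]

/-- The embedding of `ℕ³` into `ℤ³`. -/
def castEmb : ℕ × ℕ × ℕ ↪ ℤ × ℤ × ℤ :=
  Nat.castEmbedding.prodMap (Nat.castEmbedding.prodMap Nat.castEmbedding)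

lemma ssum_eq_sum (w : KK) {n : ℤ} {N : ℕ} (hN : n < N) (b c d : ℤ) :
    ssum w n b c d = poch w n * ∑ p ∈ Finset.range N ×ˢ Finset.range N ×ˢ Finset.range N,
      sterm w n b c d (p.1, p.2.1, p.2.2) := by
  rw [ssum, finsum_eq_sum_of_injective castEmb]
  · rfl
  · rintro ⟨m₂, m₃, m₄⟩ h
    have h' : ¬ (n < m₂ ∨ n < m₄ ∨ m₄ < 0 ∨ m₃ < 0 ∨ m₂ < m₃) :=
      fun hcon => h (sterm_eq_zero w b c d hcon)
    refine ⟨(m₂.toNat, m₃.toNat, m₄.toNat), ?_, ?_⟩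
    · simp only [Finset.mem_product, Finset.mem_range]
      omega
    · simp only [castEmb, Function.Embedding.coe_prodMap, Prod.map_apply, Nat.castEmbedding_apply,
        Prod.mk.injEq]
      omega

/-- The coefficients of `∑ ... z^n / (z;q)_∞` as images of formal power series. -/
lemma conv_ssum (α β b c d : ℕ) (n : ℤ) :
    conv ww (fun m => ww ^ β * (ww ^ m) ^ α * ssum ww m b c d) n
      = φ (∑' k, T α β b c d k * E 1 (n - k.1)) := by
  set N : ℕ := n.toNat + 1 with hN
  set box := Finset.range N ×ˢ Finset.range N ×ˢ Finset.range N with hbox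
  have h1 : ∀ k ∉ Finset.range N ×ˢ box, T α β b c d k * E 1 (n - k.1) = 0 := by
    rintro ⟨n₁, n₂, n₃, n₄⟩ hk
    refine φ_inj ?_
    rw [map_mul, φ_T, φ_E_one, map_zero]
    rcases lt_or_ge (n - n₁) 0 with h | h
    · rw [rpoch_neg _ h, mul_zero]
    · rw [sterm_eq_zero, mul_zero, mul_zero, zero_mul]
      simp only [hbox, Finset.mem_product, Finset.mem_range] at hk
      omega
  rw [tsum_eq_sum h1, map_sum, Finset.sum_product, conv,
    finsum_eq_sum_of_injective Nat.castEmbedding (Finset.range N)]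
  · refine Finset.sum_congr rfl fun m hm => ?_
    rw [Finset.mem_range] at hm
    rw [Nat.castEmbedding_apply, ssum_eq_sum ww (N := N) (by omega)]
    simp only [Finset.mul_sum, Finset.sum_mul]
    refine Finset.sum_congr rfl fun p _ => ?_
    rw [map_mul, φ_T, φ_E_one]
  · intro m hm
    refine ⟨m.toNat, ?_, ?_⟩
    · rw [Finset.mem_range]
      by_contra hcon
      exact hm (by rw [rpoch_neg _ (show n - m < 0 by omega), mul_zero])
    · rw [Nat.castEmbedding_apply]
      by_contra hcon
      exact hm (by rw [ssum_neg _ (show m < 0 by omega), mul_zero, zero_mul])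

/-- The four parts of the quadruple sum, convolved with reciprocal q-factorials. -/
lemma conv_g320_eq (n : ℤ) :
    conv ww (g320 ww) n = φ (∑' k, T 1 0 0 1 0 k * E 1 (n - k.1)
      + ∑' k, T 2 1 0 0 0 k * E 1 (n - 1 - k.1) + ∑' k, T 3 2 0 1 0 k * E 1 (n - 1 - k.1)
      + ∑' k, T 4 3 1 1 1 k * E 1 (n - 1 - k.1)) := by
  have hc : ∀ α β b c d : ℕ, Causal fun m => ww ^ β * (ww ^ m) ^ α * ssum ww m b c d :=
    fun α β b c d m hm => by simp only [ssum_neg ww hm, mul_zero]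
  have hc' : ∀ α β b c d : ℕ, Causal fun m =>
      (fun m => ww ^ β * (ww ^ m) ^ α * ssum ww m b c d) (m - 1) :=
    fun α β b c d m hm => hc α β b c d (m - 1) (by omega)
  simp only [map_add, ← conv_ssum]
  rw [← conv_shift ww _ n, ← conv_shift ww _ n, ← conv_shift ww _ n,
    ← conv_add ww (hc 1 0 0 1 0) (hc' 2 1 0 0 0),
    ← conv_add ww ((hc 1 0 0 1 0).add (hc' 2 1 0 0 0)) (hc' 3 2 0 1 0),
    ← conv_add ww (((hc 1 0 0 1 0).add (hc' 2 1 0 0 0)).add (hc' 3 2 0 1 0)) (hc' 4 3 1 1 1)]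
  congr 1
  funext m
  simp [g320]

/-- The summands of the two lattice sums, without the reciprocal q-factorials. -/
noncomputable def Lam (r : ℤ) (p : ℤ × ℤ) : ℚ⟦X⟧ := X ^ (lexp r 2 0 p).toNat

lemma lexp_bounds {r a t : ℤ} (hr : r = 0 ∨ r = 2) :
    0 ≤ lexp r 2 0 (a, t) ∧ |a| ≤ lexp r 2 0 (a, t) + 2 ∧ |t| ≤ lexp r 2 0 (a, t) + 2 := by
  have h : -1 < lexp r 2 0 (a, t) := by
    rcases hr with rfl | rfl <;> simp only [lexp] <;>
    nlinarith [sq_nonneg (8 * a + 1), sq_nonneg (24 * (a + 2 * t) + 5),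
      sq_nonneg (24 * (a + 2 * t) + 37)]
  refine ⟨by omega, ?_, ?_⟩ <;> rw [abs_le] <;> rcases hr with rfl | rfl <;>
  simp only [lexp] <;> constructor <;>
  nlinarith [sq_nonneg (8 * a + 1), sq_nonneg (24 * (a + 2 * t) + 5), sq_nonneg (2 * a + 1),
    sq_nonneg (2 * a - 1), sq_nonneg (24 * (a + 2 * t) + 37), sq_nonneg (16 * a + 24 * t + 3),
    sq_nonneg (16 * a + 24 * t + 19), sq_nonneg (2 * t + 1), sq_nonneg (4 * t + 3)]

lemma small_Lam {r : ℤ} (hr : r = 0 ∨ r = 2) : Small (Lam r) := by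
  refine small_of_exponent _ (fun k => dvd_rfl) fun e =>
    (Set.finite_Icc ((-(e + 2 : ℤ), -(e + 2 : ℤ)) : ℤ × ℤ) (e + 2, e + 2)).subset ?_
  rintro ⟨a, t⟩ hk
  obtain ⟨h0, h1, h2⟩ := lexp_bounds (a := a) (t := t) hr
  simp only [Set.mem_ofPred_eq] at hk
  rw [abs_le] at h1 h2
  simp only [Set.mem_Icc, Prod.mk_le_mk]
  omega

lemma lat_eq {r : ℤ} (hr : r = 0 ∨ r = 2) (n : ℤ) :
    lat ww r n n n 2 0 = φ (∑' p, Lam r p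
      * (E 1 (n - p.1) * E 1 (n - (p.1 + 3 * p.2 + r)) * E 1 (n + (2 * p.1 + 3 * p.2 + r)))) := by
  have hφ : ∀ p, φ (Lam r p
      * (E 1 (n - p.1) * E 1 (n - (p.1 + 3 * p.2 + r)) * E 1 (n + (2 * p.1 + 3 * p.2 + r))))
      = lterm ww r n n n 2 0 p := by
    rintro ⟨a, t⟩
    have h : φ (Lam r (a, t)) = ww ^ lexp r 2 0 (a, t) := by
      rw [Lam, map_pow, ← zpow_natCast, Int.toNat_of_nonneg (lexp_bounds hr).1, ww]
    simp only [map_mul, h, φ_E_one, lterm]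
    ring
  have hf := lterm_finite ww r n n n 2 0
  rw [lat, finsum_eq_sum _ hf, tsum_eq_sum (s := hf.toFinset), map_sum]
  · simp only [hφ]
  · intro p hp
    refine φ_inj ?_
    rw [hφ, map_zero]
    simpa using hp

/-- The quadruple sum as a theta series: the limit of the finite identity. -/
lemma quadruple_eq_lattice :
    (∑' k, T 1 0 0 1 0 k + ∑' k, T 2 1 0 0 0 k + ∑' k, T 3 2 0 1 0 k + ∑' k, T 4 3 1 1 1 k)
      * B 1 1 ^ 2 = ∑' p, Lam 0 p - ∑' p, Lam 2 p := by
  set e := (B 1 1)⁻¹ with he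
  have hB : e * B 1 1 = 1 :=
    PowerSeries.inv_mul_cancel _ (by simp [constantCoeff_B])
  have hu : ∀ a : ℤ, Tendsto (fun n : ℕ => (n : ℤ) + a) atTop atTop := fun a =>
    tendsto_atTop_add_const_right _ _ tendsto_natCast_atTop_atTop
  have hE : ∀ a : ℤ, Tendsto (fun n : ℕ => E 1 (n + a)) atTop (𝓝 e) := fun a =>
    tendsto_E one_pos (hu a)
  have hE' : ∀ a : ℤ, Tendsto (fun n : ℕ => E 1 (n - a)) atTop (𝓝 e) := fun a => by
    simpa only [sub_eq_add_neg] using hE (-a)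
  have hT : ∀ α β b c d : ℕ, Tendsto (fun n : ℕ => ∑' k, T α β b c d k * E 1 (n - k.1)) atTop
      (𝓝 ((∑' k, T α β b c d k) * e)) := fun α β b c d => by
    rw [← (small_T α β b c d).summable.tsum_mul_right]
    exact (small_T α β b c d).tendsto fun k => hE' _
  have hT' : ∀ α β b c d : ℕ, Tendsto (fun n : ℕ => ∑' k, T α β b c d k * E 1 (n - 1 - k.1)) atTop
      (𝓝 ((∑' k, T α β b c d k) * e)) := fun α β b c d => by
    rw [← (small_T α β b c d).summable.tsum_mul_right]
    refine (small_T α β b c d).tendsto fun k => ?_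
    simpa only [sub_sub] using hE' (1 + k.1)
  have hL : ∀ r : ℤ, r = 0 ∨ r = 2 → Tendsto (fun n : ℕ => ∑' p, Lam r p
      * (E 1 (n - p.1) * E 1 (n - (p.1 + 3 * p.2 + r)) * E 1 (n + (2 * p.1 + 3 * p.2 + r)))) atTop
      (𝓝 ((∑' p, Lam r p) * (e * e * e))) := fun r hr => by
    rw [← (small_Lam hr).summable.tsum_mul_right]
    exact (small_Lam hr).tendsto fun p => ((hE' _).mul (hE' _)).mul (hE _)
  have key := tendsto_nhds_unique
    ((((hT 1 0 0 1 0).add (hT' 2 1 0 0 0)).add (hT' 3 2 0 1 0)).add (hT' 4 3 1 1 1))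
    (((hL 0 (Or.inl rfl)).sub (hL 2 (Or.inr rfl))).congr fun n => φ_inj ?_)
  · linear_combination B 1 1 ^ 3 * key
      + (∑' p, Lam 0 p - ∑' p, Lam 2 p) * (e ^ 2 * B 1 1 ^ 2 + e * B 1 1 + 1) * hB
      - (∑' k, T 1 0 0 1 0 k + ∑' k, T 2 1 0 0 0 k + ∑' k, T 3 2 0 1 0 k + ∑' k, T 4 3 1 1 1 k)
        * B 1 1 ^ 2 * hB
  · rw [map_sub, ← lat_eq (Or.inl rfl), ← lat_eq (Or.inr rfl), ← conv_g320_eq,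
      conv_g320 generic_ww, latL]

end Macmahon

/-! ### The Jacobi triple product -/

namespace Macmahon

open Filter Topology PowerSeries

section FiniteTriple

variable {K : Type*} [Field K]

/-- The relation between neighbouring levels in the finite triple product, for one index `j`. -/
lemma triple_term {w x : K} (hw : Generic w) (hx : x ≠ 0) {u : ℤ → K}
    (hu : ∀ j, u (j + 1) = -(w ^ j * x) * u j) (n j : ℤ) :
    (1 - w ^ (2 * n + 1)) * (1 - w ^ (2 * n + 2))
        * (u j * rpoch w (n + 1 - j) * rpoch w (n + 1 + j))
      + (-(1 + w ^ (2 * n + 1))) * (u j * rpoch w (n - j) * rpoch w (n + j))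
      + w ^ n * x * (u (j - 1) * rpoch w (n - (j - 1)) * rpoch w (n + (j - 1)))
      + w ^ (n + 1) * x⁻¹ * (u (j + 1) * rpoch w (n - (j + 1)) * rpoch w (n + (j + 1))) = 0 := by
  have hw0 := hw.1
  have h1 := rpoch_rec hw (n + 1 - j)
  have h2 := rpoch_rec hw (n - j)
  have h3 := rpoch_rec hw (n + 1 + j)
  have h4 := rpoch_rec hw (n + j)
  have h5 := hu (j - 1)
  have h6 := hu j
  rw [show n + 1 - j - 1 = n - j by ring] at h1
  rw [show n + 1 + j - 1 = n + j by ring] at h3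
  rw [sub_add_cancel] at h5
  rw [show n - (j - 1) = n + 1 - j by ring, show n + (j - 1) = n + j - 1 by ring,
    show n - (j + 1) = n - j - 1 by ring, show n + (j + 1) = n + 1 + j by ring, ← h2, ← h4, ← h1,
    ← h3, h6, h5]
  rw [zpow_mul₂ hw (show 2 * n + 1 = (n + 1) + n by ring),
    zpow_mul₂ hw (show 2 * n + 2 = (n + 1) + (n + 1) by ring),
    zpow_mul₂ hw (show n + 1 - j = n + 1 + -j by ring), zpow_mul₂ hw (show n - j = n + -j by ring),
    zpow_mul₂ hw (show n + 1 + j = n + 1 + j by ring), zpow_mul₂ hw (show n + j = n + j by ring),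
    zpow_mul₂ hw (show n + 1 = n + 1 by ring), zpow_mul₂ hw (show j - 1 = j + -1 by ring),
    zpow_neg, zpow_neg, zpow_one]
  have hj : w ^ j ≠ 0 := zpow_ne_zero _ hw0
  field_simp [hx]
  ring

/-- The finite form of the triple product, with `u j = (-1)^j w^(j(j-1)/2) x^j`. -/
lemma finite_triple {w x : K} (hw : Generic w) (hx : x ≠ 0) {u : ℤ → K}
    (hu : ∀ j, u (j + 1) = -(w ^ j * x) * u j) (hu0 : u 0 = 1) (n : ℕ) :
    ∏ k ∈ Finset.range n, ((1 - x * w ^ k) * (1 - w ^ (k + 1) * x⁻¹))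
      = poch w (2 * n) * ∑ᶠ j, u j * rpoch w (n - j) * rpoch w (n + j) := by
  have fin : ∀ n : ℤ, (fun j => u j * rpoch w (n - j) * rpoch w (n + j)).support.Finite := by
    refine fun n => (Set.finite_Icc (-n) n).subset fun j hj => ?_
    by_contra hcon
    rw [Set.mem_Icc] at hcon
    refine hj ?_
    rcases (show n - j < 0 ∨ n + j < 0 by omega) with h | h <;> simp [rpoch_neg w h]
  induction n with
  | zero =>
    rw [finsum_eq_single _ 0]
    · simp [hu0]
    · intro j hj
      rcases (show (((0 : ℕ) : ℤ) - j < 0 ∨ ((0 : ℕ) : ℤ) + j < 0) by omega) with h | h <;>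
      simp only [rpoch_neg w h] <;> ring
  | succ n ih =>
    have h1 : ∑ᶠ j, u (j - 1) * rpoch w (n - (j - 1)) * rpoch w (n + (j - 1))
        = ∑ᶠ j, u j * rpoch w (n - j) * rpoch w (n + j) :=
      finsum_comp_equiv (Equiv.subRight (1 : ℤ))
        (f := fun j => u j * rpoch w (n - j) * rpoch w (n + j))
    have h2 : ∑ᶠ j, u (j + 1) * rpoch w (n - (j + 1)) * rpoch w (n + (j + 1))
        = ∑ᶠ j, u j * rpoch w (n - j) * rpoch w (n + j) :=
      finsum_comp_equiv (Equiv.addRight (1 : ℤ))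
        (f := fun j => u j * rpoch w (n - j) * rpoch w (n + j))
    have f1 : (fun j => u (j - 1) * rpoch w (n - (j - 1)) * rpoch w (n + (j - 1))).support.Finite :=
      (fin n).preimage (Equiv.subRight (1 : ℤ)).injective.injOn
    have f2 : (fun j => u (j + 1) * rpoch w (n - (j + 1)) * rpoch w (n + (j + 1))).support.Finite :=
      (fin n).preimage (Equiv.addRight (1 : ℤ)).injective.injOn
    have key := finsum_rel (Equiv.refl ℤ) _ _ _ _ 0 0 (fin (n + 1)) (fin n) f1 f2 (fin n) (fin n)
      fun j => (triple_term hw hx hu n j).trans (by ring)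
    rw [h1, h2] at key
    rw [Finset.prod_range_succ, ih]
    have p1 := poch_succ w (n := 2 * n) (by omega)
    have p2 := poch_succ w (n := 2 * n + 1) (by omega)
    rw [show 2 * (n : ℤ) + 1 + 1 = 2 * n + 2 by ring] at p2
    push_cast
    rw [show 2 * ((n : ℤ) + 1) = 2 * n + 2 by ring, p2, p1]
    have e1 : w ^ (2 * (n : ℤ) + 1) = w ^ n * w ^ (n + 1) := by
      rw [zpow_mul₂ hw (show 2 * (n : ℤ) + 1 = n + (n + 1 : ℕ) by push_cast; ring)]
      simp only [zpow_natCast]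
    have e2 : w ^ ((n : ℤ) + 1) = w ^ (n + 1) := by exact_mod_cast zpow_natCast w (n + 1)
    rw [zpow_natCast, e2, e1] at key
    rw [e1]
    have hxx : x * x⁻¹ = 1 := mul_inv_cancel₀ hx
    linear_combination (-poch w (2 * n)) * key + poch w (2 * n) * w ^ n * w ^ (n + 1)
      * (∑ᶠ j, u j * rpoch w (n - j) * rpoch w (n + j)) * hxx

end FiniteTriple

/-- The sign `(-1)^j`. -/
noncomputable def sgn (j : ℤ) : ℚ⟦X⟧ := ((j.negOnePow : ℤ) : ℚ⟦X⟧)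

lemma sgn_add (i j : ℤ) : sgn (i + j) = sgn i * sgn j := by
  simp [sgn, Int.negOnePow_add]

lemma sgn_one : sgn 1 = -1 := by simp [sgn]

lemma sgn_zero : sgn 0 = 1 := by simp [sgn]

lemma sgn_neg (j : ℤ) : sgn (-j) = sgn j := by simp [sgn]

lemma sgn_two_mul (j : ℤ) : sgn (2 * j) = 1 := by
  simp [sgn, Int.negOnePow_even _ (even_two_mul j)]

/-- The exponent `N j(j-1)/2 + r j`. -/
def texp (N r : ℕ) (j : ℤ) : ℤ := N * (j * (j - 1) / 2) + r * j

lemma texp_two (N r : ℕ) (j : ℤ) : 2 * texp N r j = N * (j * (j - 1)) + 2 * r * j := by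
  have h : 2 * (j * (j - 1) / 2) = j * (j - 1) :=
    Int.mul_ediv_cancel' (Int.even_mul_pred_self j).two_dvd
  rw [texp]
  linear_combination N * h

lemma texp_bounds {N r : ℕ} (hN : 0 < N) (hr : r ≤ N) (j : ℤ) :
    0 ≤ texp N r j ∧ |j| ≤ texp N r j + 1 := by
  have h := texp_two N r j
  zify at hN hr
  rcases le_or_gt 0 j with hj | hj
  · rw [abs_of_nonneg hj]
    have h1 : 0 ≤ j * (j - 1) := by
      rcases hj.eq_or_lt with rfl | hj
      · simp
      · exact mul_nonneg hj.le (by omega)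
    have h2 : 0 ≤ (r : ℤ) * j := by positivity
    constructor <;> nlinarith [sq_nonneg (j - 1), sq_nonneg (j - 2)]
  · rw [abs_of_neg hj]
    have h1 : 0 ≤ (-j - 1) * -j := mul_nonneg (by omega) (by omega)
    have h2 : 0 ≤ ((N : ℤ) - r) * -j := mul_nonneg (by omega) (by omega)
    constructor <;> nlinarith [sq_nonneg (j + 1), sq_nonneg (j + 2)]

/-- The summand of the theta series. -/
noncomputable def th (N r : ℕ) (j : ℤ) : ℚ⟦X⟧ := sgn j * X ^ (texp N r j).toNat

lemma small_th {N r : ℕ} (hN : 0 < N) (hr : r ≤ N) : Small (th N r) := by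
  refine small_of_exponent _ (fun j => dvd_mul_left _ _) fun e =>
    (Set.finite_Icc (-(e + 1) : ℤ) (e + 1)).subset fun j hj => ?_
  obtain ⟨h0, h1⟩ := texp_bounds hN hr j
  simp only [Set.mem_ofPred_eq] at hj
  rw [abs_le] at h1
  rw [Set.mem_Icc]
  omega

lemma φ_th {N r : ℕ} (hN : 0 < N) (hr : r ≤ N) (j : ℤ) :
    φ (th N r j) = φ (sgn j) * ww ^ texp N r j := by
  rw [th, map_mul, map_pow, ← zpow_natCast, Int.toNat_of_nonneg (texp_bounds hN hr j).1, ww]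

lemma finite_triple_series {N r : ℕ} (hr : 0 < r) (hrN : r < N) (n : ℕ) :
    (∏ k ∈ Finset.range n, (1 - X ^ (N * k + r) : ℚ⟦X⟧))
        * ∏ k ∈ Finset.range n, (1 - X ^ (N * k + (N - r)) : ℚ⟦X⟧)
      = P N (2 * n) * ∑' j, th N r j * (E N (n - j) * E N (n + j)) := by
  have hN : 0 < N := hr.trans hrN
  have hw0 : ww ≠ 0 := generic_ww.1
  have hfin : ∀ j ∉ Finset.Icc (-n : ℤ) n, th N r j * (E N (n - j) * E N (n + j)) = 0 := by
    intro j hj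
    rw [Finset.mem_Icc] at hj
    rcases (show (n : ℤ) - j < 0 ∨ (n : ℤ) + j < 0 by omega) with h | h
    · rw [E, if_neg (by omega), zero_mul, mul_zero]
    · rw [E, E, if_neg (by omega : ¬ 0 ≤ (n : ℤ) + j), mul_zero, mul_zero]
  have hu : ∀ j, φ (th N r (j + 1)) = -((ww ^ N) ^ j * ww ^ r) * φ (th N r j) := by
    intro j
    have h : texp N r (j + 1) = N * j + r + texp N r j :=
      mul_left_cancel₀ (two_ne_zero (α := ℤ)) (by
        rw [mul_add, texp_two, texp_two]; ring)
    rw [φ_th hN hrN.le, φ_th hN hrN.le, h, sgn_add, sgn_one, zpow_add₀ hw0, zpow_add₀ hw0, zpow_mul,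
      zpow_natCast, zpow_natCast, map_mul, map_neg, map_one]
    ring
  have hu0 : φ (th N r 0) = 1 := by simp [th, texp, sgn_zero]
  have key := finite_triple (u := fun j => φ (th N r j)) (generic_pow hN) (pow_ne_zero r hw0) hu hu0 n
  refine φ_inj ?_
  rw [← Finset.prod_mul_distrib, map_prod, map_mul, φ_P, tsum_eq_sum hfin, map_sum]
  rw [finsum_eq_sum_of_support_subset (s := Finset.Icc (-n : ℤ) n)] at key
  · refine Eq.trans ?_ (key.trans ?_)
    · refine Finset.prod_congr rfl fun k _ => ?_
      have h : ww ^ (N * k + (N - r)) = (ww ^ N) ^ (k + 1) * (ww ^ r)⁻¹ := by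
        rw [eq_mul_inv_iff_mul_eq₀ (pow_ne_zero _ hw0), ← pow_add, ← pow_mul]
        congr 1
        rw [add_assoc, Nat.sub_add_cancel hrN.le]
        ring
      simp only [map_mul, map_sub, map_one, map_pow]
      rw [show φ X = ww from rfl, h, pow_add, pow_mul]
      ring
    · congr 1
      refine Finset.sum_congr rfl fun j _ => ?_
      rw [map_mul, map_mul, φ_E hN, φ_E hN, mul_assoc]
  · intro j hj
    by_contra hcon
    refine hj ?_
    have := congrArg φ (hfin j hcon)
    rwa [map_mul, map_mul, φ_E hN, φ_E hN, map_zero, ← mul_assoc] at this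

/-- The Jacobi triple product. -/
lemma tsum_th {N r : ℕ} (hr : 0 < r) (hrN : r < N) :
    ∑' j, th N r j = B N N * B N r * B N (N - r) := by
  have hN : 0 < N := hr.trans hrN
  have hB : (B N N)⁻¹ * B N N = 1 :=
    PowerSeries.inv_mul_cancel _ (by simp [constantCoeff_B hN hN])
  have hu : ∀ a : ℤ, Tendsto (fun n : ℕ => (n : ℤ) + a) atTop atTop := fun a =>
    tendsto_atTop_add_const_right _ _ tendsto_natCast_atTop_atTop
  have h1 : Tendsto (fun n : ℕ => ∑' j, th N r j * (E N (n - j) * E N (n + j))) atTop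
      (𝓝 ((∑' j, th N r j) * ((B N N)⁻¹ * (B N N)⁻¹))) := by
    rw [← (small_th hN hrN.le).summable.tsum_mul_right]
    refine (small_th hN hrN.le).tendsto fun j => ?_
    exact (tendsto_E hN (by simpa only [sub_eq_add_neg] using hu (-j))).mul (tendsto_E hN (hu j))
  have h2 : Tendsto (fun n : ℕ => P N (2 * n)) atTop (𝓝 (B N N)) := by
    have : Tendsto (fun n : ℕ => (2 * (n : ℤ)).toNat) atTop atTop :=
      tendsto_atTop.2 fun b => (eventually_ge_atTop b).mono fun n hn => by omega
    exact (tendsto_B (r := N) hN).comp this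
  have key := tendsto_nhds_unique ((tendsto_B (r := r) hN).mul (tendsto_B (r := N - r) hN))
    ((h2.mul h1).congr fun n => (finite_triple_series hr hrN n).symm)
  linear_combination (-B N N) * key - (∑' j, th N r j) * ((B N N)⁻¹ * B N N + 1) * hB

end Macmahon

/-! ### The lattice sum as a product -/

namespace Macmahon

open Filter Topology PowerSeries

lemma Small.prod {ι κ : Type*} {T : ι → ℚ⟦X⟧} {U : κ → ℚ⟦X⟧} (hT : Small T) (hU : Small U) :
    Small fun p : ι × κ => T p.1 * U p.2 :=
  fun d => ((hT d).prod (hU d)).subset fun _ hp =>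
    ⟨fun h => hp (h.mul_right _), fun h => hp (h.mul_left _)⟩

lemma Small.comp {ι κ : Type*} {T : ι → ℚ⟦X⟧} (hT : Small T) {f : κ → ι}
    (hf : Function.Injective f) : Small fun k => T (f k) :=
  fun d => (hT d).preimage hf.injOn

/-- The terms `m` and `1 - m` cancel. -/
lemma tsum_th_zero {N : ℕ} : ∑' j, th N 0 j = 0 := by
  have h : ∑' j, th N 0 j = ∑' j, -th N 0 j := by
    rw [← (Equiv.subLeft (1 : ℤ)).tsum_eq (th N 0)]
    refine tsum_congr fun j => ?_
    have : texp N 0 (1 - j) = texp N 0 j := mul_left_cancel₀ (two_ne_zero (α := ℤ)) (by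
      rw [texp_two, texp_two]; push_cast; ring)
    rw [Equiv.subLeft_apply, th, th, this, sub_eq_add_neg, sgn_add, sgn_one, sgn_neg]
    ring
  rw [tsum_neg] at h
  ext d
  have hd := congrArg (coeff d) h
  rw [map_neg] at hd
  rw [map_zero]
  linarith

lemma B_eight : B 8 8 = B 24 24 * B 24 8 * B 24 16 := by
  rw [B_split (c := 3) (by norm_num) (by norm_num)]
  simp only [Finset.prod_range_succ, Finset.prod_range_zero]
  norm_num
  ring

/-- The theta series that arise when the product of three theta series is summed along the lines
of direction `(-1, -1, 1)`. The one for `ρ = 1` is Euler's pentagonal number series in `q ^ 8`. -/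
lemma tsum_th_residue (ρ : Fin 3) :
    ∑' m, th 24 (16 - 8 * ρ) m = if (ρ : ℕ) = 2 then 0 else B 8 8 := by
  fin_cases ρ
  · norm_num
    rw [tsum_th (by norm_num) (by norm_num), B_eight]
    norm_num
    ring
  · norm_num
    rw [tsum_th (by norm_num) (by norm_num), B_eight]
  · exact tsum_th_zero

/-- The summand of the product of three theta series. -/
noncomputable def W (x : (ℤ × ℤ) × ℤ) : ℚ⟦X⟧ := th 8 1 x.1.1 * th 8 3 x.1.2 * th 8 4 x.2

/-- Coordinates on `ℤ³` adapted to the direction `(-1, -1, 1)`: the residue `ρ` is that of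
`i + j + 2k` modulo `3`. -/
def coords : (Fin 3 × (ℤ × ℤ)) × ℤ ≃ (ℤ × ℤ) × ℤ where
  toFun x := ((x.1.2.1 - x.2 - x.1.2.2, 2 * x.1.2.2 + (x.1.1 : ℕ) - x.1.2.1 - x.2), x.2 + x.1.2.2)
  invFun y := ((⟨((y.1.1 + y.1.2 + 2 * y.2) % 3).toNat, by omega⟩,
    (y.1.1 + y.2, (y.1.1 + y.1.2 + 2 * y.2) / 3)), y.2 - (y.1.1 + y.1.2 + 2 * y.2) / 3)
  left_inv := by
    rintro ⟨⟨⟨ρ, hρ⟩, a, u⟩, m⟩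
    simp only [Prod.mk.injEq, Fin.mk.injEq]
    omega
  right_inv := by
    rintro ⟨⟨i, j⟩, k⟩
    simp only [Prod.mk.injEq]
    omega

lemma W_coords (x : Fin 3 × (ℤ × ℤ)) (m : ℤ) :
    W (coords (x, m)) = W (coords (x, 0)) * th 24 (16 - 8 * x.1) m := by
  obtain ⟨⟨ρ, hρ⟩, a, u⟩ := x
  have hw0 : ww ≠ 0 := generic_ww.1
  have hr : ((16 - 8 * ρ : ℕ) : ℤ) = 16 - 8 * ρ := by omega
  have he : texp 8 1 (a - m - u) + texp 8 3 (2 * u + ρ - a - m) + texp 8 4 (m + u)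
      = texp 8 1 (a - 0 - u) + texp 8 3 (2 * u + ρ - a - 0) + texp 8 4 (0 + u)
        + texp 24 (16 - 8 * ρ) m := by
    refine mul_left_cancel₀ (two_ne_zero (α := ℤ)) ?_
    simp only [mul_add, texp_two, hr]
    push_cast
    ring
  have hs : sgn (a - m - u) * sgn (2 * u + ρ - a - m) * sgn (m + u)
      = sgn (a - 0 - u) * sgn (2 * u + ρ - a - 0) * sgn (0 + u) * sgn m := by
    simp only [← sgn_add]
    rw [show a - m - u + (2 * u + ρ - a - m) + (m + u) = 2 * u + ρ + -m by ring,
      show a - 0 - u + (2 * u + ρ - a - 0) + (0 + u) + m = 2 * u + ρ + m by ring, sgn_add, sgn_neg,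
      ← sgn_add]
  refine φ_inj ?_
  have hs' := congrArg φ hs
  have he' := congrArg (ww ^ ·) he
  simp only [zpow_add₀ hw0, map_mul] at hs' he'
  simp only [W, coords, Equiv.coe_fn_mk, map_mul]
  rw [φ_th (by norm_num) (by norm_num), φ_th (by norm_num) (by norm_num),
    φ_th (by norm_num) (by norm_num), φ_th (by norm_num) (by norm_num),
    φ_th (by norm_num) (by norm_num), φ_th (by norm_num) (by norm_num),
    φ_th (by norm_num) (by omega)]
  linear_combination (φ (sgn (a - m - u)) * φ (sgn (2 * u + ρ - a - m)) * φ (sgn (m + u))) * he'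
    + (ww ^ texp 8 1 (a - 0 - u) * ww ^ texp 8 3 (2 * u + ρ - a - 0) * ww ^ texp 8 4 (0 + u)
      * ww ^ texp 24 (16 - 8 * ρ) m) * hs'

lemma φ_Lam {r : ℤ} (hr : r = 0 ∨ r = 2) (p : ℤ × ℤ) : φ (Lam r p) = ww ^ lexp r 2 0 p := by
  rw [Lam, map_pow, ← zpow_natCast, Int.toNat_of_nonneg (lexp_bounds hr).1, ww]

lemma W_zero (a u : ℤ) : W (coords ((0, (a, u)), 0)) = Lam 0 (a - 3 * u, -a + 2 * u) := by
  have hw0 : ww ≠ 0 := generic_ww.1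
  refine φ_inj ?_
  rw [φ_Lam (Or.inl rfl)]
  simp only [W, coords, Equiv.coe_fn_mk, map_mul]
  rw [φ_th (by norm_num) (by norm_num), φ_th (by norm_num) (by norm_num),
    φ_th (by norm_num) (by norm_num)]
  have he : lexp 0 2 0 (a - 3 * u, -a + 2 * u)
      = texp 8 1 (a - 0 - u) + texp 8 3 (2 * u + ((0 : Fin 3) : ℕ) - a - 0) + texp 8 4 (0 + u) := by
    refine mul_left_cancel₀ (two_ne_zero (α := ℤ)) ?_
    simp only [mul_add, texp_two, lexp, Fin.val_zero]
    push_cast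
    ring
  have hs : sgn (a - 0 - u) * sgn (2 * u + ((0 : Fin 3) : ℕ) - a - 0) * sgn (0 + u) = 1 := by
    rw [← sgn_add, ← sgn_add, ← sgn_two_mul u]
    congr 1
    simp only [Fin.val_zero]
    push_cast
    ring
  have hs' := congrArg φ hs
  rw [map_mul, map_mul, map_one] at hs'
  rw [he, zpow_add₀ hw0, zpow_add₀ hw0]
  linear_combination (ww ^ texp 8 1 (a - 0 - u) * ww ^ texp 8 3 (2 * u + ((0 : Fin 3) : ℕ) - a - 0)
    * ww ^ texp 8 4 (0 + u)) * hs'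

lemma W_one (a u : ℤ) : W (coords ((1, (a, u)), 0)) = -Lam 2 (a - 3 * u - 1, -a + 2 * u) := by
  have hw0 : ww ≠ 0 := generic_ww.1
  refine φ_inj ?_
  rw [map_neg, φ_Lam (Or.inr rfl)]
  simp only [W, coords, Equiv.coe_fn_mk, map_mul]
  rw [φ_th (by norm_num) (by norm_num), φ_th (by norm_num) (by norm_num),
    φ_th (by norm_num) (by norm_num)]
  have he : lexp 2 2 0 (a - 3 * u - 1, -a + 2 * u)
      = texp 8 1 (a - 0 - u) + texp 8 3 (2 * u + ((1 : Fin 3) : ℕ) - a - 0) + texp 8 4 (0 + u) := by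
    refine mul_left_cancel₀ (two_ne_zero (α := ℤ)) ?_
    simp only [mul_add, texp_two, lexp, Fin.val_one]
    push_cast
    ring
  have hs : sgn (a - 0 - u) * sgn (2 * u + ((1 : Fin 3) : ℕ) - a - 0) * sgn (0 + u) = -1 := by
    rw [← sgn_add, ← sgn_add, ← sgn_one, ← one_mul (sgn 1), ← sgn_two_mul u, ← sgn_add]
    congr 1
    simp only [Fin.val_one]
    push_cast
    ring
  have hs' := congrArg φ hs
  rw [map_mul, map_mul, map_neg, map_one] at hs'
  rw [he, zpow_add₀ hw0, zpow_add₀ hw0]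
  linear_combination (ww ^ texp 8 1 (a - 0 - u) * ww ^ texp 8 3 (2 * u + ((1 : Fin 3) : ℕ) - a - 0)
    * ww ^ texp 8 4 (0 + u)) * hs'

/-- An affine change of coordinates of `ℤ²`. -/
def affine (c : ℤ) : ℤ × ℤ ≃ ℤ × ℤ where
  toFun p := (p.1 - 3 * p.2 - c, -p.1 + 2 * p.2)
  invFun p := (-2 * (p.1 + c) - 3 * p.2, -(p.1 + c) - p.2)
  left_inv := by rintro ⟨a, u⟩; simp only [Prod.mk.injEq]; omega
  right_inv := by rintro ⟨a, u⟩; simp only [Prod.mk.injEq]; omega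

lemma small_W : Small W :=
  ((small_th (by norm_num) (by norm_num)).prod (small_th (by norm_num) (by norm_num))).prod
    (small_th (by norm_num) (by norm_num))

/-- The product of three theta series is `(q^8; q^8)_∞` times the difference of two lattice sums. -/
lemma theta_eq_lattice :
    (∑' j, th 8 1 j) * (∑' j, th 8 3 j) * ∑' j, th 8 4 j
      = B 8 8 * (∑' p, Lam 0 p - ∑' p, Lam 2 p) := by
  have s1 : Small (th 8 1) := small_th (by norm_num) (by norm_num)
  have s3 : Small (th 8 3) := small_th (by norm_num) (by norm_num)
  have s4 : Small (th 8 4) := small_th (by norm_num) (by norm_num)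
  have hV : Small fun x : Fin 3 × (ℤ × ℤ) => W (coords (x, 0)) :=
    small_W.comp fun x y h => (Prod.mk.inj (coords.injective h)).1
  obtain ⟨C, hC⟩ : ∃ C : Fin 3 → ℚ⟦X⟧, ∀ ρ, C ρ = if (ρ : ℕ) = 2 then 0 else B 8 8 :=
    ⟨_, fun _ => rfl⟩
  have hV' := hV.mul fun x => C x.1
  have hfib : ∀ ρ : Fin 3, Small (th 24 (16 - 8 * ρ)) :=
    fun ρ => small_th (by norm_num) (by omega)
  rw [s1.summable.tsum_mul_tsum s3.summable (s1.prod s3).summable,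
    (s1.prod s3).summable.tsum_mul_tsum s4.summable small_W.summable]
  change ∑' x, W x = _
  rw [← coords.tsum_eq W,
    (small_W.comp coords.injective).summable.tsum_prod'
      (fun x => (small_W.comp (coords.injective.comp (Prod.mk_right_injective x))).summable)]
  have h1 : ∀ x : Fin 3 × (ℤ × ℤ), ∑' m, W (coords (x, m))
      = W (coords (x, 0)) * C x.1 := by
    intro x
    rw [hC, ← tsum_th_residue, ← (hfib x.1).summable.tsum_mul_left]
    exact tsum_congr fun m => W_coords x m
  have h0 : ∑' p : ℤ × ℤ, W (coords ((0, p), 0)) = ∑' p, Lam 0 p := by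
    rw [← (affine 0).tsum_eq (Lam 0)]
    refine tsum_congr fun p => ?_
    rw [W_zero, affine, Equiv.coe_fn_mk, sub_zero]
  have h2 : ∑' p : ℤ × ℤ, W (coords ((1, p), 0)) = -∑' p, Lam 2 p := by
    rw [← (affine 1).tsum_eq (Lam 2), ← tsum_neg]
    exact tsum_congr fun p => W_one p.1 p.2
  have hs : ∀ ρ : Fin 3, Summable fun p : ℤ × ℤ => W (coords ((ρ, p), 0)) := fun ρ =>
    (hV.comp (Prod.mk_right_injective ρ)).summable
  rw [tsum_congr h1, hV'.summable.tsum_prod'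
    (fun ρ => (hV'.comp (Prod.mk_right_injective ρ)).summable), tsum_fintype, Fin.sum_univ_three]
  dsimp only
  rw [(hs 0).tsum_mul_right, (hs 1).tsum_mul_right, (hs 2).tsum_mul_right, h0, h2, hC, hC, hC]
  norm_num
  ring

lemma B_one_one : B 1 1 = B 8 1 * B 8 2 * B 8 3 * B 8 4 * B 8 5 * B 8 6 * B 8 7 * B 8 8 := by
  rw [B_split (c := 8) (by norm_num) (by norm_num)]
  simp only [Finset.prod_range_succ, Finset.prod_range_zero]
  norm_num

/-- The sum of the four quadruple sums, times the denominator of the product side. -/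
lemma quadruple_mul :
    (∑' k, T 1 0 0 1 0 k + ∑' k, T 2 1 0 0 0 k + ∑' k, T 3 2 0 1 0 k + ∑' k, T 4 3 1 1 1 k)
      * (B 8 1 * B 8 2 ^ 2 * B 8 3 * B 8 5 * B 8 6 ^ 2 * B 8 7) = 1 := by
  have hB : ∀ r, 0 < r → B 8 r ≠ 0 := fun r hr => B_ne_zero (by norm_num) hr
  have h1 := quadruple_eq_lattice
  have h2 := theta_eq_lattice
  rw [tsum_th (by norm_num) (by norm_num), tsum_th (by norm_num) (by norm_num),
    tsum_th (by norm_num) (by norm_num), ← h1, B_one_one] at h2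
  norm_num at h2
  refine mul_left_cancel₀ (a := B 8 8 ^ 3 * B 8 1 * B 8 3 * B 8 4 ^ 2 * B 8 5 * B 8 7) ?_ ?_
  · simp [hB]
  · linear_combination -h2

lemma product_eq :
    ∏' k : ℕ, ((1 - q ^ (8*k+1)) * (1 - q ^ (8*k+2))^2 * (1 - q ^ (8*k+3)) * (1 - q ^ (8*k+5))
        * (1 - q ^ (8*k+6))^2 * (1 - q ^ (8*k+7)))
      = B 8 1 * B 8 2 ^ 2 * B 8 3 * B 8 5 * B 8 6 ^ 2 * B 8 7 := by
  have h : ∀ r, HasProd (fun k : ℕ => (1 - q ^ (8 * k + r))) (B 8 r) :=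
    fun r => (multipliable_B (by norm_num)).hasProd
  simp only [pow_two]
  exact ((((((h 1).mul ((h 2).mul (h 2))).mul (h 3)).mul (h 5)).mul ((h 6).mul (h 6))).mul
    (h 7)).tprod_eq

lemma summand_eq (k : ℕ × ℕ × ℕ × ℕ) :
    (fun n₁ n₂ n₃ n₄ : ℕ =>
        q ^ (n₁ ^ 2 + n₂ ^ 2 + n₃ ^ 2 + n₄ ^ 2 + (n₁) + n₂ * n₄ - n₁ * n₂)
          * (q ^ n₃ + q ^ (n₁ + 1) + q ^ (2*n₁ + n₃ + 2) + q ^ (3*n₁ + n₂ + n₃ + n₄ + 3))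
          * (qPoch n₁)⁻¹ * qBinom n₁ n₂ * qBinom n₁ n₄ * qBinom n₂ n₃)
      k.1 k.2.1 k.2.2.1 k.2.2.2
      = T 1 0 0 1 0 k + T 2 1 0 0 0 k + T 3 2 0 1 0 k + T 4 3 1 1 1 k := by
  obtain ⟨n₁, n₂, n₃, n₄⟩ := k
  obtain ⟨e, he⟩ : ∃ e, n₁ ^ 2 + n₂ ^ 2 + n₃ ^ 2 + n₄ ^ 2 + n₂ * n₄ = n₁ * n₂ + e := by
    refine Nat.exists_eq_add_of_le ?_
    nlinarith [Nat.zero_le (n₂ * n₄), Nat.zero_le (n₁ * n₂), sq_nonneg ((n₁ : ℤ) - n₂)]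
  have h1 : n₁ ^ 2 + n₂ ^ 2 + n₃ ^ 2 + n₄ ^ 2 + n₁ + n₂ * n₄ - n₁ * n₂ = e + n₁ := by omega
  have h2 : n₁ ^ 2 + n₂ ^ 2 + n₃ ^ 2 + n₄ ^ 2 + n₂ * n₄ - n₁ * n₂ = e := by omega
  simp only [T, h1, h2, q]
  ring

end Macmahon

/-- Seventh new modulus-8 identity (profile (3,2,0)). -/
theorem a2_mod8_profile320 :
    ∑' n : ℕ × ℕ × ℕ × ℕ,
      (fun n₁ n₂ n₃ n₄ : ℕ =>
        q ^ (n₁ ^ 2 + n₂ ^ 2 + n₃ ^ 2 + n₄ ^ 2 + (n₁) + n₂ * n₄ - n₁ * n₂)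
          * (q ^ n₃ + q ^ (n₁ + 1) + q ^ (2*n₁ + n₃ + 2) + q ^ (3*n₁ + n₂ + n₃ + n₄ + 3)) * (qPoch n₁)⁻¹ * qBinom n₁ n₂ * qBinom n₁ n₄ * qBinom n₂ n₃)
      n.1 n.2.1 n.2.2.1 n.2.2.2
      = (∏' k : ℕ, ((1 - q ^ (8*k+1)) * (1 - q ^ (8*k+2))^2 * (1 - q ^ (8*k+3)) * (1 - q ^ (8*k+5)) * (1 - q ^ (8*k+6))^2 * (1 - q ^ (8*k+7))))⁻¹ := by
  have hs : ∀ α β b c d, Summable (Macmahon.T α β b c d) := fun α β b c d =>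
    (Macmahon.small_T α β b c d).summable
  have hB : ∀ r, 0 < r → PowerSeries.constantCoeff (Macmahon.B 8 r) = 1 := fun r hr =>
    Macmahon.constantCoeff_B (by norm_num) hr
  rw [Macmahon.product_eq, tsum_congr Macmahon.summand_eq,
    (((hs 1 0 0 1 0).add (hs 2 1 0 0 0)).add (hs 3 2 0 1 0)).tsum_add (hs 4 3 1 1 1),
    ((hs 1 0 0 1 0).add (hs 2 1 0 0 0)).tsum_add (hs 3 2 0 1 0),
    (hs 1 0 0 1 0).tsum_add (hs 2 1 0 0 0), PowerSeries.eq_inv_iff_mul_eq_one]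
  · exact Macmahon.quadruple_mul
  · simp [hB]
end

section
/- Equality of two quadruple sums (profiles (4,1,0) and (4,0,1)): Σ_{n_1,n_2,n_3,n_4 ≥ 0} q^(n_1^2+n_2^2+n_3^2+n_4^2+n_2+n_3+n_4-n_1n_2+n_2n_4)/(q;q)_{n_1} · [n_1 choose n_2]_q [n_1 choose n_4]_q [n_2 choose n_3]_q = Σ_{n_1,n_2,n_3,n_4 ≥ 0} q^(n_1^2+n_2^2+n_3^2+n_4^2+n_1+n_3-n_1n_2+n_2n_4)·(1 + q^{n_1+n_2+n_4+1})/(q;q)_{n_1} · [n_1 choose n_2]_q [n_1 choose n_4]_q [n_2 choose n_3]_q. -/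
/-!
The summands of the two series already balance after summation over `n₁` and `n₄`, for each fixed
`m = n₂` and `s = n₃`. Write `n₁ = m + r` and `k = n₄`. Up to a factor depending only on `m` and `s`,
the summands are `q ^ (r² + k² + m (r + k)) [m+r choose k] / (q;q)_r` times `q ^ k` on one side and
times `q ^ r + q ^ (k + 2 r + 2 m + 1)` on the other. The finite `q`-binomial theorem (`key`) expands
`q ^ (k²) [m+r choose k]` as a sum over `K + j = k`, and turns this factor into
`(-1) ^ j q ^ (r² + K² + j (r + K) + j (j + 1) / 2 + m (r + K + 2 j)) / ((q;q)_r (q;q)_K (q;q)_j)`,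
which is symmetric in `r` and `K`. Let `G a b c` be the sum over all indices with the extra weight
`q ^ (a r + b K + c j)`. The left side is `G 0 1 1`, equal to `G 1 0 1` by symmetry (`term_swap`).
In `G 1 0 1 - G 1 0 0` the terms carry the factor `q ^ j - 1`, which vanishes at `j = 0` and cancels
a factor of `(q;q)_j` otherwise; after `j` is shifted by one (`term_shift`) this difference is the
second part of the right side, so that `G 1 0 1` is the right side.
-/

open scoped Finset

/-! ### Coefficientwise convergence of power series -/

instance : T2Space (PowerSeries ℚ) :=
  inferInstanceAs (T2Space ((Unit →₀ ℕ) → ℚ))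

instance : RegularSpace (PowerSeries ℚ) :=
  inferInstanceAs (RegularSpace ((Unit →₀ ℕ) → ℚ))

instance : ContinuousAdd (PowerSeries ℚ) :=
  inferInstanceAs (ContinuousAdd ((Unit →₀ ℕ) → ℚ))

lemma summable_of_finite_coeff {ι : Type*} (f : ι → PowerSeries ℚ)
    (h : ∀ d : ℕ, {i | PowerSeries.coeff d (f i) ≠ 0}.Finite) : Summable f := by
  refine (Pi.summable (ι := ι) (X := fun _ : Unit →₀ ℕ => ℚ) (f := f)).2 fun x => ?_
  apply summable_of_hasFiniteSupport
  refine (h (x ())).subset fun i hi => ?_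
  have hx : Finsupp.single () (x ()) = x := by
    ext; simp
  simp only [Set.mem_ofPred_eq, PowerSeries.coeff, hx]
  exact hi

/-! ### The finite `q`-binomial theorem -/

lemma qPoch_succ (n : ℕ) : qPoch (n + 1) = qPoch n * (1 - q ^ (n + 1)) := by
  simp [qPoch, Finset.prod_range_succ]

lemma qPoch_mul_inv (n : ℕ) : qPoch n * (qPoch n)⁻¹ = 1 := by
  apply PowerSeries.mul_inv_cancel
  simp [qPoch, q, map_prod]

lemma inv_succ (n : ℕ) : (qPoch (n + 1))⁻¹ * (1 - q ^ (n + 1)) = (qPoch n)⁻¹ := by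
  have h1 := qPoch_mul_inv n
  have h2 := qPoch_mul_inv (n + 1)
  rw [qPoch_succ] at h2
  rw [qPoch_succ]
  linear_combination (qPoch n)⁻¹ * h2
    - (qPoch n * (1 - q ^ (n + 1)))⁻¹ * (1 - q ^ (n + 1)) * h1

lemma qBinom_of_le {n k : ℕ} (h : k ≤ n) :
    qBinom n k = qPoch n * (qPoch k)⁻¹ * (qPoch (n - k))⁻¹ := by
  rw [qBinom, if_pos h, PowerSeries.mul_inv_rev]
  ring

lemma qBinom_succ (n k : ℕ) :
    (1 - q ^ (k + 1)) * (q ^ k * qBinom n (k + 1)) = (q ^ k - q ^ n) * qBinom n k := by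
  rcases lt_trichotomy k n with h | h | h
  · obtain ⟨d, rfl⟩ : ∃ d, n = k + d + 1 := ⟨n - k - 1, by omega⟩
    rw [qBinom_of_le (by omega), qBinom_of_le (by omega)]
    have e1 : k + d + 1 - (k + 1) = d := by omega
    have e2 : k + d + 1 - k = d + 1 := by omega
    rw [e1, e2, ← inv_succ d, ← inv_succ k]
    ring
  · subst h; simp [qBinom]
  · simp [qBinom, show ¬ k ≤ n by omega, show ¬ k + 1 ≤ n by omega]

/-- The `(K, j)` term in the expansion of `q ^ (k²) [n choose k]`, where `k = K + j`. -/
noncomputable def expTerm (n K j : ℕ) : PowerSeries ℚ :=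
  (-1) ^ j * q ^ (K ^ 2 + K * j + (j + 1).choose 2 + j * n) * (qPoch K)⁻¹ * (qPoch j)⁻¹

lemma expTerm_succ_left (n K j : ℕ) :
    q ^ j * (1 - q ^ (K + 1)) * expTerm n (K + 1) j = q ^ (2 * (K + j) + 1) * expTerm n K j := by
  unfold expTerm
  rw [← inv_succ K]
  ring

lemma expTerm_succ_right (n K j : ℕ) :
    (1 - q ^ (j + 1)) * expTerm n K (j + 1) = - q ^ (K + j + 1 + n) * expTerm n K j := by
  unfold expTerm
  have : (j + 1 + 1).choose 2 = (j + 1) + (j + 1).choose 2 := by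
    rw [Nat.choose_succ_succ' (j + 1) 1, Nat.choose_one_right]
  rw [← inv_succ j, this]
  ring

/-- The right side of `key` satisfies the recurrence in `k` that `qBinom_succ` gives for the left
side. The splitting `1 - q ^ (K + j) = q ^ j (1 - q ^ K) + (1 - q ^ j)` lowers `K` or `j` by one. -/
lemma sum_expTerm_succ (n k : ℕ) :
    (1 - q ^ (k + 1)) * ∑ x ∈ Finset.HasAntidiagonal.antidiagonal (k + 1), expTerm n x.1 x.2
      = q ^ (k + 1) * (q ^ k - q ^ n) * ∑ x ∈ Finset.HasAntidiagonal.antidiagonal k, expTerm n x.1 x.2 := by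
  have h : (1 - q ^ (k + 1)) * ∑ x ∈ Finset.HasAntidiagonal.antidiagonal (k + 1), expTerm n x.1 x.2
      = ∑ x ∈ Finset.HasAntidiagonal.antidiagonal (k + 1), q ^ x.2 * (1 - q ^ x.1) * expTerm n x.1 x.2
        + ∑ x ∈ Finset.HasAntidiagonal.antidiagonal (k + 1), (1 - q ^ x.2) * expTerm n x.1 x.2 := by
    rw [Finset.mul_sum, ← Finset.sum_add_distrib]
    refine Finset.sum_congr rfl fun x hx => ?_
    rw [← Finset.HasAntidiagonal.mem_antidiagonal.1 hx]
    ring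
  rw [h, Finset.Nat.sum_antidiagonal_succ, Finset.Nat.sum_antidiagonal_succ']
  simp only [expTerm_succ_left, expTerm_succ_right]
  simp only [pow_zero, sub_self, mul_zero, zero_mul, zero_add]
  rw [← Finset.sum_add_distrib, Finset.mul_sum]
  refine Finset.sum_congr rfl fun x hx => ?_
  rw [← Finset.HasAntidiagonal.mem_antidiagonal.1 hx]
  ring

/-- A form of the finite `q`-binomial theorem. -/
lemma key (n k : ℕ) :
    q ^ (k ^ 2) * qBinom n k = ∑ x ∈ Finset.HasAntidiagonal.antidiagonal k, expTerm n x.1 x.2 := by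
  induction k with
  | zero =>
    have := qPoch_mul_inv n
    simp [expTerm, qBinom, qPoch] at this ⊢
    exact this
  | succ k ih =>
    have h1 := sum_expTerm_succ n k
    rw [← ih] at h1
    have h2 := qBinom_succ n k
    have h3 := qPoch_mul_inv (k + 1)
    rw [← sub_eq_zero]
    have h4 : (1 - q ^ (k + 1)) * (q ^ ((k + 1) ^ 2) * qBinom n (k + 1)
        - ∑ x ∈ Finset.HasAntidiagonal.antidiagonal (k + 1), expTerm n x.1 x.2) = 0 := by
      linear_combination q ^ (k ^ 2 + k + 1) * h2 - h1
    rw [qPoch_succ] at h3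
    linear_combination (qPoch k * (qPoch k * (1 - q ^ (k + 1)))⁻¹) * h4
      - (q ^ ((k + 1) ^ 2) * qBinom n (k + 1)
        - ∑ x ∈ Finset.HasAntidiagonal.antidiagonal (k + 1), expTerm n x.1 x.2) * h3

/-! ### The expanded five-fold series -/

/-- The term of the expanded series `G a b c` at the indices `(r, m, s, K, j)`. The first line is the
factor depending only on `m = n₂` and `s = n₃`. -/
noncomputable def term (a b c : ℕ) (p : ℕ × ℕ × ℕ × ℕ × ℕ) : PowerSeries ℚ :=
  (fun r m s K j : ℕ =>
    (q ^ (m ^ 2 + s ^ 2 + m + s) * (qPoch m)⁻¹ * qBinom m s) *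
      ((-1) ^ j * q ^ (r ^ 2 + K ^ 2 + j * (r + K) + (j + 1).choose 2 + m * (r + K + 2 * j)
        + (a * r + b * K + c * j)) * (qPoch r)⁻¹ * (qPoch K)⁻¹ * (qPoch j)⁻¹))
  p.1 p.2.1 p.2.2.1 p.2.2.2.1 p.2.2.2.2

/-- The part of the right side of the theorem that comes from `q ^ (n₁ + n₂ + n₄ + 1)`. -/
noncomputable def shiftTerm (p : ℕ × ℕ × ℕ × ℕ × ℕ) : PowerSeries ℚ :=
  q ^ (2 * p.2.1 + 1) * term 2 1 1 p

/-- Each index is bounded by the exponent of `q` in `term`, so only finitely many terms reach a given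
coefficient; an extra power of `q` does no harm. -/
lemma summable_term (a b c : ℕ) (e : ℕ × ℕ × ℕ × ℕ × ℕ → ℕ) :
    Summable (fun p => q ^ e p * term a b c p) := by
  apply summable_of_finite_coeff
  intro d
  refine (Set.finite_Iic ((d, d, d, d, d) : ℕ × ℕ × ℕ × ℕ × ℕ)).subset ?_
  rintro ⟨r, m, s, K, j⟩ h
  by_contra hn
  apply h
  have hlt : d < (m ^ 2 + s ^ 2 + m + s) +
      (r ^ 2 + K ^ 2 + j * (r + K) + (j + 1).choose 2 + m * (r + K + 2 * j)
        + (a * r + b * K + c * j)) := by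
    by_contra hle
    apply hn
    have hr : r ≤ r ^ 2 := Nat.le_self_pow (by norm_num) r
    have hK : K ≤ K ^ 2 := Nat.le_self_pow (by norm_num) K
    have hj : (j + 1).choose 2 = j + j.choose 2 := by
      rw [Nat.choose_succ_succ' j 1, Nat.choose_one_right]
    simp only [Set.mem_Iic, Prod.mk_le_mk]
    refine ⟨?_, ?_, ?_, ?_, ?_⟩ <;>
    · generalize j * (r + K) = x1 at *
      generalize m * (r + K + 2 * j) = x2 at *
      generalize a * r + b * K + c * j = x3 at *
      omega
  have hdvd : (PowerSeries.X : PowerSeries ℚ) ^ ((m ^ 2 + s ^ 2 + m + s) +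
      (r ^ 2 + K ^ 2 + j * (r + K) + (j + 1).choose 2 + m * (r + K + 2 * j)
        + (a * r + b * K + c * j))) ∣ q ^ e (r, m, s, K, j) * term a b c (r, m, s, K, j) := by
    refine ⟨q ^ e (r, m, s, K, j) * ((qPoch m)⁻¹ * qBinom m s * (-1) ^ j * (qPoch r)⁻¹
      * (qPoch K)⁻¹ * (qPoch j)⁻¹), ?_⟩
    change _ = q ^ _ * _
    simp only [term]
    rw [pow_add q (m ^ 2 + s ^ 2 + m + s)]
    ring
  exact PowerSeries.X_pow_dvd_iff.1 hdvd d hlt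

lemma summable_term' (a b c : ℕ) : Summable (term a b c) := by
  simpa using summable_term a b c (fun _ => 0)

/-- A series over `(n₁, n₂, n₃, n₄)` supported on `n₂ ≤ n₁` is the regrouping, along `n₁ = m + r` and
`n₄ = K + j`, of a series over `(r, m, s, K, j)`. -/
lemma hasSum_regroup (f : ℕ × ℕ × ℕ × ℕ → PowerSeries ℚ) (h : ℕ × ℕ × ℕ × ℕ × ℕ → PowerSeries ℚ)
    (A : PowerSeries ℚ) (hA : HasSum h A)
    (h0 : ∀ n₁ n₂ s k, n₁ < n₂ → f (n₁, n₂, s, k) = 0)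
    (h1 : ∀ r m s k, f (m + r, m, s, k) =
      ∑ x ∈ Finset.HasAntidiagonal.antidiagonal k, h (r, m, s, x.1, x.2)) : HasSum f A := by
  let φ : (Σ b : ℕ × ℕ × ℕ × ℕ, {x // x ∈ Finset.HasAntidiagonal.antidiagonal b.2.2.2})
      ≃ ℕ × ℕ × ℕ × ℕ × ℕ :=
    { toFun := fun y => (y.1.1, y.1.2.1, y.1.2.2.1, y.2.1.1, y.2.1.2)
      invFun := fun p => ⟨(p.1, p.2.1, p.2.2.1, p.2.2.2.1 + p.2.2.2.2),
        ⟨(p.2.2.2.1, p.2.2.2.2), by simp⟩⟩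
      left_inv := by
        rintro ⟨⟨r, m, s, k⟩, ⟨⟨K, j⟩, hx⟩⟩
        obtain rfl : K + j = k := by simpa using hx
        rfl
      right_inv := fun p => rfl }
  have hs : HasSum (h ∘ φ) A := φ.hasSum_iff.2 hA
  have h2 : HasSum (fun b : ℕ × ℕ × ℕ × ℕ => f (b.2.1 + b.1, b.2.1, b.2.2.1, b.2.2.2)) A := by
    refine hs.sigma fun b => ?_
    rw [h1]
    exact Finset.hasSum (Finset.HasAntidiagonal.antidiagonal b.2.2.2)
      (fun x => h (b.1, b.2.1, b.2.2.1, x.1, x.2))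
  let ψ : ℕ × ℕ × ℕ × ℕ → ℕ × ℕ × ℕ × ℕ := fun b => (b.2.1 + b.1, b.2.1, b.2.2.1, b.2.2.2)
  have hψ : Function.Injective ψ := by
    rintro ⟨r, m, s, k⟩ ⟨r', m', s', k'⟩ hh
    simp only [ψ, Prod.mk.injEq] at hh ⊢
    omega
  refine (hψ.hasSum_iff ?_).1 h2
  rintro ⟨n₁, n₂, s, k⟩ hn
  apply h0
  by_contra hlt
  exact hn ⟨(n₁ - n₂, n₂, s, k), by simp only [ψ, Prod.mk.injEq, and_true]; omega⟩

lemma term_swap (a b c r m s K j : ℕ) :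
    term a b c (r, m, s, K, j) = term b a c (K, m, s, r, j) := by
  simp only [term]
  rw [show r ^ 2 + K ^ 2 + j * (r + K) + (j + 1).choose 2 + m * (r + K + 2 * j)
      + (a * r + b * K + c * j) = K ^ 2 + r ^ 2 + j * (K + r) + (j + 1).choose 2
      + m * (K + r + 2 * j) + (b * K + a * r + c * j) by ring]
  ring

lemma term_shift (r m s K j : ℕ) :
    term 1 0 1 (r, m, s, K, j + 1) - term 1 0 0 (r, m, s, K, j + 1)
      = shiftTerm (r, m, s, K, j) := by
  have : (j + 1 + 1).choose 2 = (j + 1) + (j + 1).choose 2 := by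
    rw [Nat.choose_succ_succ' (j + 1) 1, Nat.choose_one_right]
  simp only [term, shiftTerm]
  rw [← inv_succ j, this]
  ring

/-- In the notation of the header, `G 0 1 1 = G 1 0 1 = G 1 0 0 + ∑ shiftTerm`. -/
lemma tsum_term_eq :
    ∑' p, term 0 1 1 p = ∑' p, (term 1 0 0 p + shiftTerm p) := by
  let σ : ℕ × ℕ × ℕ × ℕ × ℕ ≃ ℕ × ℕ × ℕ × ℕ × ℕ :=
    { toFun := fun p => (p.2.2.2.1, p.2.1, p.2.2.1, p.1, p.2.2.2.2)
      invFun := fun p => (p.2.2.2.1, p.2.1, p.2.2.1, p.1, p.2.2.2.2)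
      left_inv := fun p => rfl
      right_inv := fun p => rfl }
  have e1 : ∑' p, term 0 1 1 p = ∑' p, term 1 0 1 p := by
    rw [← σ.tsum_eq (term 1 0 1)]
    exact tsum_congr fun ⟨r, m, s, K, j⟩ => term_swap 0 1 1 r m s K j
  have hS : Summable shiftTerm := summable_term 2 1 1 (fun p => 2 * p.2.1 + 1)
  let τ : ℕ × ℕ × ℕ × ℕ × ℕ → ℕ × ℕ × ℕ × ℕ × ℕ :=
    fun p => (p.1, p.2.1, p.2.2.1, p.2.2.2.1, p.2.2.2.2 + 1)
  have hτ : Function.Injective τ := by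
    rintro ⟨r, m, s, K, j⟩ ⟨r', m', s', K', j'⟩ hh
    simp only [τ, Prod.mk.injEq] at hh ⊢
    omega
  have hD : HasSum (fun p => term 1 0 1 p - term 1 0 0 p) (∑' p, shiftTerm p) := by
    refine (hτ.hasSum_iff ?_).1 (hS.hasSum.congr_fun ?_)
    · rintro ⟨r, m, s, K, j⟩ hn
      cases j with
      | zero => simp [term]
      | succ j => exact absurd ⟨(r, m, s, K, j), rfl⟩ hn
    · rintro ⟨r, m, s, K, j⟩
      exact term_shift r m s K j
  have h0 := (summable_term' 1 0 0).hasSum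
  rw [e1, (h0.add hS.hasSum).tsum_eq, ← (h0.add hD).tsum_eq]
  exact tsum_congr fun p => by ring

/-! ### Comparison with the quadruple sums -/

/-- Both summands of the theorem have the shape of the left side, with `e` an extra exponent; `key`
expands them into `term`s. -/
lemma summand_eq (r m s k e : ℕ) :
    q ^ (r ^ 2 + k ^ 2 + m * (r + k) + (m ^ 2 + s ^ 2 + m + s) + e)
        * (qPoch (m + r))⁻¹ * qBinom (m + r) m * qBinom (m + r) k * qBinom m s
      = ∑ x ∈ Finset.HasAntidiagonal.antidiagonal k, q ^ e * term 0 0 0 (r, m, s, x.1, x.2) := by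
  have hk := key (m + r) k
  have hb : (qPoch (m + r))⁻¹ * qBinom (m + r) m = (qPoch m)⁻¹ * (qPoch r)⁻¹ := by
    rw [qBinom_of_le (by omega), Nat.add_sub_cancel_left]
    linear_combination (qPoch m)⁻¹ * (qPoch r)⁻¹ * qPoch_mul_inv (m + r)
  calc _ = q ^ (r ^ 2 + m * (r + k) + (m ^ 2 + s ^ 2 + m + s) + e)
        * ((qPoch (m + r))⁻¹ * qBinom (m + r) m) * qBinom m s
        * (q ^ (k ^ 2) * qBinom (m + r) k) := by ring
    _ = _ := by
      rw [hk, hb, Finset.mul_sum]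
      refine Finset.sum_congr rfl fun x hx => ?_
      rw [← Finset.HasAntidiagonal.mem_antidiagonal.1 hx]
      simp only [term, expTerm]
      ring

/-- Equality of the two quadruple sums for profiles (4,1,0) and (4,0,1). -/
theorem sum410_eq_sum401 :
    ∑' n : ℕ × ℕ × ℕ × ℕ,
      (fun n₁ n₂ n₃ n₄ : ℕ =>
        q ^ (n₁ ^ 2 + n₂ ^ 2 + n₃ ^ 2 + n₄ ^ 2 + (n₂ + n₃ + n₄) + n₂ * n₄ - n₁ * n₂)
          * (qPoch n₁)⁻¹ * qBinom n₁ n₂ * qBinom n₁ n₄ * qBinom n₂ n₃)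
      n.1 n.2.1 n.2.2.1 n.2.2.2
    = ∑' n : ℕ × ℕ × ℕ × ℕ,
      (fun n₁ n₂ n₃ n₄ : ℕ =>
        q ^ (n₁ ^ 2 + n₂ ^ 2 + n₃ ^ 2 + n₄ ^ 2 + (n₁ + n₃) + n₂ * n₄ - n₁ * n₂)
          * (1 + q ^ (n₁ + n₂ + n₄ + 1))
          * (qPoch n₁)⁻¹ * qBinom n₁ n₂ * qBinom n₁ n₄ * qBinom n₂ n₃)
      n.1 n.2.1 n.2.2.1 n.2.2.2 := by
  have hS : Summable shiftTerm := summable_term 2 1 1 (fun p => 2 * p.2.1 + 1)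
  have hz : ∀ n₁ n₂ : ℕ, n₁ < n₂ → qBinom n₁ n₂ = 0 := fun n₁ n₂ h => by
    simp [qBinom, not_le.2 h]
  have hL := hasSum_regroup _ _ (summable_term' 0 1 1).hasSum
    (f := fun n => (fun n₁ n₂ n₃ n₄ : ℕ =>
        q ^ (n₁ ^ 2 + n₂ ^ 2 + n₃ ^ 2 + n₄ ^ 2 + (n₂ + n₃ + n₄) + n₂ * n₄ - n₁ * n₂)
          * (qPoch n₁)⁻¹ * qBinom n₁ n₂ * qBinom n₁ n₄ * qBinom n₂ n₃)
      n.1 n.2.1 n.2.2.1 n.2.2.2)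
    (fun n₁ n₂ s k h => by simp [hz n₁ n₂ h])
    (fun r m s k => by
      have he : (m + r) ^ 2 + m ^ 2 + s ^ 2 + k ^ 2 + (m + s + k) + m * k - (m + r) * m
          = r ^ 2 + k ^ 2 + m * (r + k) + (m ^ 2 + s ^ 2 + m + s) + k :=
        Nat.sub_eq_of_eq_add (by ring)
      dsimp only
      rw [he, summand_eq]
      refine Finset.sum_congr rfl fun x hx => ?_
      rw [← Finset.HasAntidiagonal.mem_antidiagonal.1 hx]
      simp only [term]
      ring)
  have hR := hasSum_regroup _ _ ((summable_term' 1 0 0).add hS).hasSum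
    (f := fun n => (fun n₁ n₂ n₃ n₄ : ℕ =>
        q ^ (n₁ ^ 2 + n₂ ^ 2 + n₃ ^ 2 + n₄ ^ 2 + (n₁ + n₃) + n₂ * n₄ - n₁ * n₂)
          * (1 + q ^ (n₁ + n₂ + n₄ + 1))
          * (qPoch n₁)⁻¹ * qBinom n₁ n₂ * qBinom n₁ n₄ * qBinom n₂ n₃)
      n.1 n.2.1 n.2.2.1 n.2.2.2)
    (fun n₁ n₂ s k h => by simp [hz n₁ n₂ h])
    (fun r m s k => by
      have he : (m + r) ^ 2 + m ^ 2 + s ^ 2 + k ^ 2 + (m + r + s) + m * k - (m + r) * m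
          = r ^ 2 + k ^ 2 + m * (r + k) + (m ^ 2 + s ^ 2 + m + s) + r :=
        Nat.sub_eq_of_eq_add (by ring)
      dsimp only
      rw [he]
      have h1 := summand_eq r m s k r
      have h2 := summand_eq r m s k (k + 2 * r + 2 * m + 1)
      rw [Finset.sum_add_distrib]
      have h3 : ∑ x ∈ Finset.HasAntidiagonal.antidiagonal k, term 1 0 0 (r, m, s, x.1, x.2)
          = ∑ x ∈ Finset.HasAntidiagonal.antidiagonal k, q ^ r * term 0 0 0 (r, m, s, x.1, x.2) := by
        refine Finset.sum_congr rfl fun x _ => ?_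
        simp only [term]
        ring
      have h4 : ∑ x ∈ Finset.HasAntidiagonal.antidiagonal k, shiftTerm (r, m, s, x.1, x.2)
          = ∑ x ∈ Finset.HasAntidiagonal.antidiagonal k,
            q ^ (k + 2 * r + 2 * m + 1) * term 0 0 0 (r, m, s, x.1, x.2) := by
        refine Finset.sum_congr rfl fun x hx => ?_
        rw [← Finset.HasAntidiagonal.mem_antidiagonal.1 hx]
        simp only [shiftTerm, term]
        ring
      rw [h3, h4, ← h1, ← h2]
      ring)
  rw [hL.tsum_eq, hR.tsum_eq]
  exact tsum_term_eq
end
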